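/- arXiv:2107.14022 — 5 statements merged into one kernel-verified Lean document; each statement's English description precedes it below -/
import Mathlib

section
/- Let A be a finite alphabet with at least 6 letters. Then Ann has a winning strategy for the erase-repetition game over A: there exists an Ann strategy ψ such that for every Ben strategy φ, the set of lengths of the words arising in the play between ψ and φ is unbounded. -/
open scoped Classical

/-- If the word `w` has a suffix that is a square `u ++ u` (with `u` nonempty), erase
the second half `u` of the shortest such square suffix; otherwise do nothing. -/
noncomputable def eraseStep {A : Type*} (w : List A) : List A :=
  if h : ∃ n, 0 < n ∧ ∃ u : List A, u.length = n ∧ (u ++ u) <:+ w then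
    w.take (w.length - Nat.find h)
  else w

/-- Repeatedly erase the second half of the shortest square suffix, until no suffix of
the word is a square.  Since each erasing strictly shortens the word, iterating
`eraseStep` `w.length` many times reaches the fixed point. -/
noncomputable def reduce {A : Type*} (w : List A) : List A := eraseStep^[w.length] w

/-- The play of the erase-repetition game over the alphabet `A`: starting from the
empty word, Ann (strategy `ψ`) and Ben (strategy `φ`) alternately append a letter,
Ann moving first; after each move the word is reduced by repeatedly erasing the
second half of the shortest square suffix. -/
noncomputable def playER {A : Type*} (ψ φ : List A → A) : ℕ → List A
  | 0 => []
  | k + 1 =>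
      let w := playER ψ φ k
      reduce (w ++ [if Even k then ψ w else φ w])


/-!
The strategy of Ann.  Words are handled in reversed form `r` (last letter first).  `Mt r n L` says that
the last `L` letters agree with the letters `n` places earlier.  Ann keeps every match at distance
`n` with `2^j ≤ n < 2^(j+1)` of length less than `2^j`.  In each turn she avoids the last three
letters, breaks the unique long match in the class `4 ≤ n < 8`, and breaks the unique long match in
one further class, the classes being served according to the ruler sequence of a virtual clock `t`.
Then Ben can only erase his own letter.
-/

/-- The last `L` letters agree with the letters `n` places before them (reversed word). -/
def Mt {A : Type*} (r : List A) (n L : ℕ) : Prop :=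
  ∀ i < L, i + n < r.length ∧ r[i]? = r[i + n]?

/-- The invariant at the turns of Ann. -/
def GoodW {A : Type*} (r : List A) (t : ℕ) : Prop :=
  (∀ k j n L, 2 ^ j ≤ n → n < 2 ^ (j + 1) → Mt (r.drop k) n L → L + 1 ≤ 2 ^ j) ∧
  (∀ i n L, 2 ^ (i + 3) ≤ n → n < 2 ^ (i + 4) → Mt r n L →
    ∃ s, t ≤ s ∧ s % 2 ^ (i + 1) = 2 ^ i ∧ L + 2 * (s - t) + 1 ≤ 2 ^ (i + 3))

theorem Mt.mono {A : Type*} {r : List A} {n L L' : ℕ} (h : Mt r n L) (hl : L' ≤ L) : Mt r n L' :=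
  fun i hi => h i (by omega)

theorem Mt.tail {A : Type*} {r : List A} {x : A} {n L : ℕ} (h : Mt (x :: r) n (L + 1)) :
    Mt r n L := by
  intro i hi
  have := h (i + 1) (by omega)
  have e : i + 1 + n = (i + n) + 1 := by omega
  rw [e] at this
  simpa using this

theorem Mt.head {A : Type*} {r : List A} {x : A} {n L : ℕ} (hn : 0 < n)
    (h : Mt (x :: r) n (L + 1)) : r[n - 1]? = some x := by
  have := (h 0 (by omega)).2
  obtain ⟨m, rfl⟩ : ∃ m, n = m + 1 := ⟨n - 1, by omega⟩
  rw [Nat.zero_add] at this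
  simpa using this.symm

theorem Mt.diff {A : Type*} {r : List A} {n₁ n₂ a : ℕ} (h : n₁ < n₂) (h1 : Mt r n₁ a)
    (h2 : Mt r n₂ a) : Mt (r.drop n₁) (n₂ - n₁) a := by
  intro i hi
  have a1 := h1 i hi
  have a2 := h2 i hi
  refine ⟨by rw [List.length_drop]; omega, ?_⟩
  rw [List.getElem?_drop, List.getElem?_drop]
  rw [show n₁ + i = i + n₁ by omega, ← a1.2, show n₁ + (i + (n₂ - n₁)) = i + n₂ by omega, a2.2]

/-- At most one long match in each class. -/
theorem GoodW.unique {A : Type*} {r : List A} {t : ℕ} (h : GoodW r t) {j n₁ n₂ : ℕ}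
    (a1 : 2 ^ (j + 1) ≤ n₁) (a2 : n₁ < 2 ^ (j + 2)) (b1 : 2 ^ (j + 1) ≤ n₂) (b2 : n₂ < 2 ^ (j + 2))
    (h1 : Mt r n₁ (2 ^ j)) (h2 : Mt r n₂ (2 ^ j)) : n₁ = n₂ := by
  have key : ∀ m₁ m₂, 2 ^ (j + 1) ≤ m₁ → m₂ < 2 ^ (j + 2) → m₁ < m₂ → Mt r m₁ (2 ^ j) →
      Mt r m₂ (2 ^ j) → False := by
    intro m₁ m₂ c1 c2 hlt g1 g2
    have hd := Mt.diff hlt g1 g2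
    have hne : m₂ - m₁ ≠ 0 := by omega
    have := h.1 m₁ (Nat.log 2 (m₂ - m₁)) (m₂ - m₁) (2 ^ j) (Nat.pow_log_le_self 2 hne)
      (Nat.lt_pow_succ_log_self (by norm_num) _) hd
    have hs : m₂ - m₁ < 2 ^ (j + 1) := by
      rw [pow_succ] at *; omega
    have hl : Nat.log 2 (m₂ - m₁) < j + 1 := Nat.log_lt_of_lt_pow hne hs
    have : 2 ^ Nat.log 2 (m₂ - m₁) ≤ 2 ^ j := Nat.pow_le_pow_right (by norm_num) (by omega)
    omega
  rcases lt_trichotomy n₁ n₂ with hh | hh | hh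
  · exact (key _ _ a1 b2 hh h1 h2).elim
  · exact hh
  · exact (key _ _ b1 a2 hh h2 h1).elim

/-- In each class there is one (optional) letter whose avoidance breaks the long match. -/
theorem GoodW.kill {A : Type*} {r : List A} {t : ℕ} (h : GoodW r t) (j : ℕ) :
    ∃ c : Option A, ∀ n, 2 ^ (j + 1) ≤ n → n < 2 ^ (j + 2) → Mt r n (2 ^ j) → r[n - 1]? = c := by
  by_cases hh : ∃ n, 2 ^ (j + 1) ≤ n ∧ n < 2 ^ (j + 2) ∧ Mt r n (2 ^ j)
  · obtain ⟨m, m1, m2, m3⟩ := hh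
    refine ⟨r[m - 1]?, fun n n1 n2 n3 => ?_⟩
    rw [h.unique n1 n2 m1 m2 n3 m3]
  · exact ⟨none, fun n n1 n2 n3 => (hh ⟨n, n1, n2, n3⟩).elim⟩

theorem next_service (i t : ℕ) : ∃ s, t + 1 ≤ s ∧ s ≤ t + 2 ^ (i + 1) ∧ s % 2 ^ (i + 1) = 2 ^ i := by
  have hp : 0 < 2 ^ i := by positivity
  have e : 2 ^ (i + 1) = 2 * 2 ^ i := by rw [pow_succ]; omega
  rw [e]
  set p := 2 ^ i
  have hm := Nat.mod_lt t (show 0 < 2 * p by omega)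
  have hd := Nat.div_add_mod t (2 * p)
  by_cases hc : t % (2 * p) < p
  · refine ⟨2 * p * (t / (2 * p)) + p, by omega, by omega, ?_⟩
    rw [Nat.mul_add_mod]; exact Nat.mod_eq_of_lt (by omega)
  · refine ⟨2 * p * (t / (2 * p) + 1) + p, by rw [mul_add]; omega, by rw [mul_add]; omega, ?_⟩
    rw [Nat.mul_add_mod]; exact Nat.mod_eq_of_lt (by omega)

theorem ruler_unique {i i' s : ℕ} (h : s % 2 ^ (i + 1) = 2 ^ i) (h' : s % 2 ^ (i' + 1) = 2 ^ i') :
    i = i' := by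
  have key : ∀ a b : ℕ, a < b → s % 2 ^ (a + 1) = 2 ^ a → s % 2 ^ (b + 1) = 2 ^ b → False := by
    intro a b hab ha hb
    have d1 : 2 ^ (a + 1) ∣ 2 ^ b := pow_dvd_pow 2 (by omega)
    have d2 : 2 ^ (a + 1) ∣ 2 ^ (b + 1) := pow_dvd_pow 2 (by omega)
    have := Nat.mod_mod_of_dvd s d2
    rw [hb, Nat.mod_eq_zero_of_dvd d1, ha] at this
    have : 0 < 2 ^ a := by positivity
    omega
  rcases lt_trichotomy i i' with hh | hh | hh
  · exact (key _ _ hh h h').elim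
  · exact hh
  · exact (key _ _ hh h' h).elim

/-- The invariant is preserved by any admissible extension. -/
theorem GoodW.step {A : Type*} {r r' : List A} {t : ℕ} {x : A} (h : GoodW r t)
    (hdrop : ∀ k n L, Mt (r'.drop k) n L → 0 < n →
      (∃ k', Mt (r.drop k') n L) ∨ ((2 ≤ L → Mt r n (L - 2) ∧ r[n - 1]? = some x) ∧
        (n = 1 → L = 0)))
    (hr : ∀ n L, Mt r' n L → 0 < n → 2 ≤ L → Mt r n (L - 2) ∧ r[n - 1]? = some x)
    (x1 : r[1]? ≠ some x) (x2 : r[2]? ≠ some x)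
    (x3 : ∀ n, 4 ≤ n → n < 8 → Mt r n 2 → r[n - 1]? ≠ some x)
    (x4 : ∀ i n, t % 2 ^ (i + 1) = 2 ^ i → 2 ^ (i + 3) ≤ n → n < 2 ^ (i + 4) →
      Mt r n (2 ^ (i + 2)) → r[n - 1]? ≠ some x) : GoodW r' (t + 1) := by
  have main : ∀ i n L, 2 ^ (i + 3) ≤ n → n < 2 ^ (i + 4) →
      (2 ≤ L → Mt r n (L - 2) ∧ r[n - 1]? = some x) →
      ∃ s, t + 1 ≤ s ∧ s % 2 ^ (i + 1) = 2 ^ i ∧ L + 2 * (s - (t + 1)) + 1 ≤ 2 ^ (i + 3) := by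
    intro i n L n1 n2 hL
    have e1 : 2 ^ (i + 2) = 2 * 2 ^ (i + 1) := by rw [pow_succ]; omega
    have e2 : 2 ^ (i + 3) = 2 * 2 ^ (i + 2) := by rw [pow_succ]; omega
    by_cases hs : L ≤ 2 ^ (i + 2) + 1
    · obtain ⟨s, s1, s2, s3⟩ := next_service i t
      exact ⟨s, s1, s3, by omega⟩
    · have hp : 0 < 2 ^ (i + 1) := by positivity
      obtain ⟨g1, g2⟩ := hL (by omega)
      obtain ⟨s, s1, s2, s3⟩ := h.2 i n _ n1 n2 g1
      rcases Nat.eq_or_lt_of_le s1 with hst | hst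
      · subst hst
        exact (x4 i n s2 n1 n2 (g1.mono (by omega)) g2).elim
      · exact ⟨s, hst, s2, by omega⟩
  refine ⟨?_, ?_⟩
  · intro k j n L n1 n2 hM
    have hn : 0 < n := lt_of_lt_of_le (by positivity) n1
    rcases hdrop k n L hM hn with ⟨k', hk⟩ | ⟨hL, h1⟩
    · exact h.1 k' j n L n1 n2 hk
    · match j, n1, n2 with
      | 0, n1, n2 =>
        have := h1 (by norm_num at n1 n2; omega)
        simp [this]
      | 1, n1, n2 =>
        by_contra hc
        norm_num at n1 n2 hc
        obtain ⟨-, g⟩ := hL (by omega)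
        rcases (show n = 2 ∨ n = 3 by omega) with rfl | rfl
        · exact x1 g
        · exact x2 g
      | 2, n1, n2 =>
        by_contra hc
        norm_num at n1 n2 hc
        obtain ⟨g1, g⟩ := hL (by omega)
        exact x3 n n1 n2 (g1.mono (by omega)) g
      | i + 3, n1, n2 =>
        obtain ⟨s, s1, s2, s3⟩ := main i n L n1 n2 hL
        omega
  · intro i n L n1 n2 hM
    have hn : 0 < n := lt_of_lt_of_le (by positivity) n1
    exact main i n L n1 n2 (hr n L hM hn)

theorem exists_letter {A : Type*} [Fintype A] (hA : 6 ≤ Fintype.card A)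
    (a b c d e : Option A) : ∃ x : A, a ≠ some x ∧ b ≠ some x ∧ c ≠ some x ∧ d ≠ some x ∧
      e ≠ some x := by
  by_contra hc
  push Not at hc
  have hsub : (Finset.univ.image (some : A → Option A)) ⊆ ({a, b, c, d, e} : Finset (Option A)) := by
    intro o ho
    obtain ⟨x, -, rfl⟩ := Finset.mem_image.1 ho
    have := hc x
    simp only [Finset.mem_insert, Finset.mem_singleton]
    tauto
  have h1 := Finset.card_le_card hsub
  rw [Finset.card_image_of_injective _ (Option.some_injective A), Finset.card_univ] at h1
  have h2 : ({a, b, c, d, e} : Finset (Option A)).card ≤ 5 := Finset.card_le_five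
  omega

theorem GoodW.exists_move {A : Type*} [Fintype A] (hA : 6 ≤ Fintype.card A) {r : List A} {t : ℕ}
    (h : GoodW r t) : ∃ x : A, GoodW (x :: r) (t + 1) ∧
      ∀ y, y ≠ x → GoodW (y :: x :: r) (t + 1) := by
  obtain ⟨c, hc⟩ := h.kill 1
  obtain ⟨d, hd⟩ : ∃ d : Option A, ∀ i n, t % 2 ^ (i + 1) = 2 ^ i → 2 ^ (i + 3) ≤ n →
      n < 2 ^ (i + 4) → Mt r n (2 ^ (i + 2)) → r[n - 1]? = d := by
    by_cases ht : ∃ i, t % 2 ^ (i + 1) = 2 ^ i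
    · obtain ⟨i, hi⟩ := ht
      obtain ⟨d, hd⟩ := h.kill (i + 2)
      refine ⟨d, fun i' n hi' n1 n2 hM => ?_⟩
      obtain rfl := ruler_unique hi hi'
      exact hd n n1 n2 hM
    · exact ⟨none, fun i n hi => (ht ⟨i, hi⟩).elim⟩
  obtain ⟨x, y0, y1, y2, y3, y4⟩ := exists_letter hA r[0]? r[1]? r[2]? c d
  have x3 : ∀ n, 4 ≤ n → n < 8 → Mt r n 2 → r[n - 1]? ≠ some x := by
    intro n n1 n2 hM
    rw [hc n (by norm_num; omega) (by norm_num; omega) (by simpa using hM)]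
    exact y3
  have x4 : ∀ i n, t % 2 ^ (i + 1) = 2 ^ i → 2 ^ (i + 3) ≤ n → n < 2 ^ (i + 4) →
      Mt r n (2 ^ (i + 2)) → r[n - 1]? ≠ some x := by
    intro i n hi n1 n2 hM
    rw [hd i n hi n1 n2 hM]
    exact y4
  have p1 : ∀ n L, Mt (x :: r) n L → 0 < n → 1 ≤ L → Mt r n (L - 1) ∧ r[n - 1]? = some x := by
    intro n L hM hn hL
    obtain ⟨m, rfl⟩ : ∃ m, L = m + 1 := ⟨L - 1, by omega⟩
    exact ⟨hM.tail, hM.head hn⟩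
  have p1' : ∀ n L, Mt (x :: r) n L → 0 < n → 2 ≤ L → Mt r n (L - 2) ∧ r[n - 1]? = some x := by
    intro n L hM hn hL
    obtain ⟨a, b⟩ := p1 n L hM hn (by omega)
    exact ⟨a.mono (by omega), b⟩
  have q1 : ∀ L, Mt (x :: r) 1 L → L = 0 := by
    intro L hM
    by_contra hL
    exact y0 (p1 1 L hM (by omega) (by omega)).2
  refine ⟨x, h.step ?_ p1' y1 y2 x3 x4, ?_⟩
  · intro k n L hM hn
    cases k with
    | zero => exact Or.inr ⟨p1' n L hM hn, fun e => by subst e; exact q1 L hM⟩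
    | succ k => exact Or.inl ⟨k, by simpa using hM⟩
  · intro y hy
    have p2 : ∀ n L, Mt (y :: x :: r) n L → 0 < n → 2 ≤ L →
        Mt r n (L - 2) ∧ r[n - 1]? = some x := by
      intro n L hM hn hL
      obtain ⟨m, rfl⟩ : ∃ m, L = m + 2 := ⟨L - 2, by omega⟩
      exact ⟨hM.tail.tail, hM.tail.head hn⟩
    refine h.step ?_ p2 y1 y2 x3 x4
    intro k n L hM hn
    match k, hM with
    | 0, hM =>
      refine Or.inr ⟨p2 n L hM hn, fun e => ?_⟩
      subst e
      by_contra hL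
      obtain ⟨m, rfl⟩ : ∃ m, L = m + 1 := ⟨L - 1, by omega⟩
      have := hM.head hn
      simp at this
      exact hy this.symm
    | 1, hM =>
      have hM' : Mt (x :: r) n L := by simpa using hM
      exact Or.inr ⟨p1' n L hM' hn, fun e => by subst e; exact q1 L hM'⟩
    | k + 2, hM => exact Or.inl ⟨k, by simpa using hM⟩

theorem goodW_nil {A : Type*} : GoodW ([] : List A) 1 := by
  have h0 : ∀ n L, Mt ([] : List A) n L → L = 0 := by
    intro n L hM
    by_contra hL
    have := (hM 0 (by omega)).1
    simp at this
  refine ⟨?_, ?_⟩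
  · intro k j n L n1 n2 hM
    rw [List.drop_nil] at hM
    rw [h0 n L hM]
    exact Nat.one_le_two_pow
  · intro i n L n1 n2 hM
    rw [h0 n L hM]
    obtain ⟨s, s1, s2, s3⟩ := next_service i 0
    have e1 : 2 ^ (i + 3) = 4 * 2 ^ (i + 1) := by rw [pow_add, pow_add 2 i 1]; omega
    exact ⟨s, by omega, s3, by omega⟩

theorem Mt.of_square {A : Type*} {w u : List A} (h : (u ++ u) <:+ w) :
    Mt w.reverse u.length u.length := by
  obtain ⟨p, rfl⟩ := h
  intro i hi
  refine ⟨by simp; omega, ?_⟩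
  simp only [List.reverse_append, List.append_assoc]
  rw [List.getElem?_append_left (by simpa using hi),
    List.getElem?_append_right (by simp), List.getElem?_append_left (by simp; omega)]
  simp

theorem GoodW.no_square {A : Type*} {w : List A} {t : ℕ} (h : GoodW w.reverse t) :
    ¬ ∃ n, 0 < n ∧ ∃ u : List A, u.length = n ∧ (u ++ u) <:+ w := by
  rintro ⟨n, hn, u, rfl, hu⟩
  have := h.1 0 (Nat.log 2 u.length) u.length u.length (Nat.pow_log_le_self 2 hn.ne')
    (Nat.lt_pow_succ_log_self (by norm_num) _) (by simpa using Mt.of_square hu)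
  have := Nat.pow_log_le_self 2 hn.ne'
  omega

theorem GoodW.eraseStep_eq {A : Type*} {w : List A} {t : ℕ} (h : GoodW w.reverse t) :
    eraseStep w = w := by
  unfold eraseStep
  rw [dif_neg h.no_square]

theorem GoodW.reduce_eq {A : Type*} {w : List A} {t : ℕ} (h : GoodW w.reverse t) :
    reduce w = w := by
  unfold reduce
  exact Function.iterate_fixed h.eraseStep_eq _

theorem GoodW.reduce_double {A : Type*} {w : List A} {x : A} {t : ℕ}
    (h : GoodW (w ++ [x]).reverse t) : reduce (w ++ [x] ++ [x]) = w ++ [x] := by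
  have hstep : eraseStep (w ++ [x] ++ [x]) = w ++ [x] := by
    unfold eraseStep
    have hex : ∃ n, 0 < n ∧ ∃ u : List A, u.length = n ∧ (u ++ u) <:+ (w ++ [x] ++ [x]) :=
      ⟨1, by omega, [x], rfl, ⟨w, by simp⟩⟩
    rw [dif_pos hex]
    have hf : Nat.find hex = 1 := by
      have a1 : Nat.find hex ≤ 1 :=
        Nat.find_min' hex ⟨Nat.one_pos, [x], rfl, ⟨w, by simp⟩⟩
      have a2 := (Nat.find_spec hex).1
      omega
    rw [hf]
    exact List.take_left' (by simp)
  unfold reduce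
  rw [show (w ++ [x] ++ [x]).length = (w.length + 1) + 1 by simp, Function.iterate_succ_apply,
    hstep]
  exact Function.iterate_fixed h.eraseStep_eq _

theorem stmt_1 (A : Type*) [Fintype A] (hA : 6 ≤ Fintype.card A) :
    ∃ ψ : List A → A, ∀ φ : List A → A, ∀ N : ℕ, ∃ k : ℕ,
      N ≤ (playER ψ φ k).length := by
  have hex : ∀ w : List A, ∃ x : A, (∃ t, GoodW w.reverse t) →
      ∃ t, GoodW (w ++ [x]).reverse t ∧ ∀ y, y ≠ x → GoodW (w ++ [x] ++ [y]).reverse t := by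
    intro w
    by_cases hw : ∃ t, GoodW w.reverse t
    · obtain ⟨t, ht⟩ := hw
      obtain ⟨x, h1, h2⟩ := ht.exists_move hA
      exact ⟨x, fun _ => ⟨t + 1, by simpa using h1, fun y hy => by simpa using h2 y hy⟩⟩
    · obtain ⟨x⟩ : Nonempty A := Fintype.card_pos_iff.1 (by omega)
      exact ⟨x, fun h => (hw h).elim⟩
  choose ψ hψ using hex
  refine ⟨ψ, fun φ N => ⟨2 * N, ?_⟩⟩
  suffices H : (∃ t, GoodW (playER ψ φ (2 * N)).reverse t) ∧ N ≤ (playER ψ φ (2 * N)).length from H.2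
  induction N with
  | zero => exact ⟨⟨1, by simpa [playER] using goodW_nil⟩, by omega⟩
  | succ N ih =>
    obtain ⟨hg, hl⟩ := ih
    obtain ⟨t, h1, h2⟩ := hψ _ hg
    have e1 : playER ψ φ (2 * N + 1) = playER ψ φ (2 * N) ++ [ψ (playER ψ φ (2 * N))] := by
      rw [playER]
      simp only [even_two_mul, if_true]
      exact h1.reduce_eq
    have hodd : ¬ Even (2 * N + 1) := by simp
    have e2 : playER ψ φ (2 * (N + 1)) =
        reduce (playER ψ φ (2 * N + 1) ++ [φ (playER ψ φ (2 * N + 1))]) := by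
      rw [show 2 * (N + 1) = (2 * N + 1) + 1 by omega, playER]
      simp only [hodd, if_false]
    rw [e2, e1]
    set w := playER ψ φ (2 * N)
    set y := φ (w ++ [ψ w])
    by_cases hy : y = ψ w
    · rw [hy, h1.reduce_double]
      exact ⟨⟨t, h1⟩, by simpa using hl⟩
    · rw [(h2 y hy).reduce_eq]
      exact ⟨⟨t, h2 y hy⟩, by simp; omega⟩
end

section
/- Let A be an alphabet with exactly 6 letters. Then Ann has a winning strategy for the hard game over A: there exists an Ann strategy ψ such that for every Ben strategy φ (a function from nonempty words over A to A ∪ {ε} with φ(v) never equal to the last letter of v), every word arising in the play between ψ and φ is square-free; consequently the shared word becomes arbitrarily long without a square ever appearing. -/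
/-- A word is square-free if none of its factors is a square `u ++ u` with `u` nonempty. -/
def SquareFree {A : Type*} (w : List A) : Prop :=
  ∀ u : List A, u ≠ [] → ¬ (u ++ u) <:+: w

/-- The play of the hard game over the alphabet `A`: starting from the empty word,
Ann (strategy `ψ : List A → A`) and Ben (strategy `φ : List A → Option A`, where
`none` means that Ben skips his turn) alternately move, Ann moving first. -/
def playH {A : Type*} (ψ : List A → A) (φ : List A → Option A) : ℕ → List A
  | 0 => []
  | k + 1 =>
      let w := playH ψ φ k
      if Even k then w ++ [ψ w] else w ++ (φ w).toList

namespace HardGame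

open Classical

/-! Words are stored in reversed order: the head of a list is the most recent letter. -/

variable {A : Type*}

/-- The third letter Ann never plays (besides the last two letters). -/
noncomputable def third (w : List A) : Option A :=
  if w[0]? = w[3]? then w[2]? else if w[0]? = w[4]? then w[3]?
  else if w[0]? = w[5]? then w[4]? else none

/-- The short-range restriction on Ann's moves. -/
def Allowed (w : List A) (x : A) : Prop :=
  some x ≠ w[0]? ∧ some x ≠ w[1]? ∧ some x ≠ third w

/-- The last `2p-1` letters have period `p`. -/
def Thr (p : ℕ) (u : List A) : Prop :=
  2 * p - 1 ≤ u.length ∧ ∀ i, i < p - 1 → u[i]? = u[i + p]?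

def AnnOk (w : List A) (x : A) : Prop :=
  Allowed w x ∧ ∀ p, 6 ≤ p → ¬ Thr p (x :: w)

/-- Legal marked histories; the mark `true` means that the letter was played by Ann. -/
def Ok : List (A × Bool) → Prop
  | [] => True
  | (x, true) :: r => AnnOk (r.map Prod.fst) x ∧ Ok r
  | (x, false) :: r => (∃ a r', r = (a, true) :: r' ∧ x ≠ a) ∧ Ok r

theorem Ok.tail {x : A × Bool} {r : List (A × Bool)} (h : Ok (x :: r)) : Ok r := by
  obtain ⟨x, m⟩ := x
  cases m <;> exact h.2

theorem Ok.ne {x y : A} {m n : Bool} {r : List (A × Bool)} (h : Ok ((x, m) :: (y, n) :: r)) :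
    x ≠ y := by
  cases m
  · obtain ⟨⟨a, r', h1, h2⟩, -⟩ := h
    simp only [List.cons.injEq, Prod.mk.injEq] at h1
    rw [h1.1.1]; exact h2
  · have := h.1.1.1
    simpa using this

theorem Ok.allowed {x : A} {r : List (A × Bool)} (h : Ok ((x, true) :: r)) :
    Allowed (r.map Prod.fst) x := h.1.1

theorem Ok.mark {x y : A} {n : Bool} {r : List (A × Bool)}
    (h : Ok ((x, false) :: (y, n) :: r)) : n = true := by
  obtain ⟨⟨a, r', h1, h2⟩, -⟩ := h
  simp only [List.cons.injEq, Prod.mk.injEq] at h1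
  exact h1.1.2

theorem Ok.drop {l r : List (A × Bool)} (h : Ok (l ++ r)) : Ok r := by
  induction l with
  | nil => exact h
  | cons x l ih => exact ih (Ok.tail h)

/-- The configuration producing simultaneous threats of periods 3 and 5 never occurs. -/
theorem no_double {b y z t : A} {m0 m1 m2 m3 m4 m5 m6 m7 : Bool} {r : List (A × Bool)}
    (h : Ok ((b, m0) :: (y, m1) :: (z, m2) :: (b, m3) :: (t, m4) :: (b, m5) :: (y, m6) ::
      (z, m7) :: r)) : False := by
  have h1 := h.tail
  have h2 := h1.tail
  have h3 := h2.tail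
  have e01 := h.ne
  have e12 := h1.ne
  have e23 := h2.ne
  have m3f : m3 = false := by
    cases m3
    · rfl
    · have := h3.allowed.2.1
      simp at this
  subst m3f
  have m2t : m2 = true := by
    cases m2
    · have := h2.mark
      simp at this
    · rfl
  subst m2t
  cases m1
  · have m0t : m0 = true := by
      cases m0
      · have := h.mark
        simp at this
      · rfl
    subst m0t
    have := h.allowed.2.2
    simp only [third, List.map_cons, List.getElem?_cons_zero, List.getElem?_cons_succ,
      Option.some.injEq] at this
    by_cases hyt : y = t
    · simp [hyt] at this
    · simp [hyt, e01.symm] at this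
  · have := h1.allowed.2.2
    simp [third, e23, e12.symm] at this

/-- No Ann move completes `2p-1` letters of period `p ≥ 2`. -/
theorem no_thr {a : A} {h : List (A × Bool)} (hok : Ok ((a, true) :: h)) (p : ℕ) (hp : 2 ≤ p)
    (ht : Thr p (a :: h.map Prod.fst)) : False := by
  by_cases h6 : 6 ≤ p
  · exact hok.1.2 p h6 ht
  obtain ⟨hl, hi⟩ := ht
  have hal := hok.allowed
  have : p = 2 ∨ p = 3 ∨ p = 4 ∨ p = 5 := by omega
  rcases this with rfl | rfl | rfl | rfl
  · have := hi 0 (by norm_num)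
    simp at this
    exact hal.2.1 (by simpa using this)
  · generalize h.map Prod.fst = w at hi hal
    have i0 : some a = w[2]? := by simpa using hi 0 (by norm_num)
    have i1 : w[0]? = w[3]? := by simpa using hi 1 (by norm_num)
    have := hal.2.2
    rw [third, if_pos i1] at this
    exact this i0
  · match h, hok, hl, hi, hal with
    | (w0, m0) :: (w1, m1) :: (w2, m2) :: (w3, m3) :: (w4, m4) :: (w5, m5) :: r,
        hok, hl, hi, hal =>
      have i0 := hi 0 (by norm_num)
      have i1 := hi 1 (by norm_num)
      have i2 := hi 2 (by norm_num)
      have := hal.2.2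
      have e := hok.tail.tail.tail.tail.ne
      simp [third] at i0 i1 i2 this
      subst i0 i1 i2
      simp [e.symm] at this
  · match h, hok, hl, hi, hal with
    | (w0, m0) :: (w1, m1) :: (w2, m2) :: (w3, m3) :: (w4, m4) :: (w5, m5) :: (w6, m6) ::
        (w7, m7) :: r, hok, hl, hi, hal =>
      have i0 := hi 0 (by norm_num)
      have i1 := hi 1 (by norm_num)
      have i2 := hi 2 (by norm_num)
      have i3 := hi 3 (by norm_num)
      have := hal.2.2
      have e := hok.tail.tail.tail.tail.tail.ne
      simp [third] at i0 i1 i2 i3 this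
      subst i0 i1 i2 i3
      by_cases hd : w0 = w3
      · subst hd
        exact no_double hok.tail
      · simp [hd, e.symm] at this

theorem sq_get (u y : List A) (i : ℕ) (hi : i < u.length) :
    (u ++ u ++ y)[i]? = (u ++ u ++ y)[i + u.length]? := by
  rw [List.append_assoc, List.getElem?_append_left hi,
    List.getElem?_append_right (by omega), List.getElem?_append_left (by omega)]
  simp

theorem ok_squareFree {h : List (A × Bool)} (hok : Ok h) : SquareFree (h.map Prod.fst) := by
  rintro u hu ⟨x, y, hxy⟩
  rw [List.append_assoc x] at hxy
  obtain ⟨h1, h2, rfl, -, h4⟩ := List.map_eq_append_iff.1 hxy.symm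
  replace hok := hok.drop
  have hg := sq_get u y
  have hlen : 2 * u.length ≤ (h2.map Prod.fst).length := by
    rw [h4]; simp; omega
  rw [← h4] at hg
  have hpos : 0 < u.length := List.length_pos_iff.2 hu
  match h2, hok, hg, hlen with
  | [], _, _, hlen => simp only [List.map_nil, List.length_nil] at hlen; omega
  | [_], _, _, hlen => simp only [List.map_cons, List.map_nil, List.length_cons, List.length_nil] at hlen; omega
  | (c, m) :: (d, n) :: r, hok, hg, hlen =>
    by_cases h1 : u.length = 1
    · have := hg 0 hpos
      rw [h1] at this
      simp at this
      exact hok.ne this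
    cases m
    · have := hok.mark
      subst this
      refine no_thr hok.tail u.length (by omega) ⟨by simp at hlen ⊢; omega, ?_⟩
      intro i hi
      have := hg (i + 1) (by omega)
      rw [show i + 1 + u.length = (i + u.length) + 1 by omega] at this
      simpa using this
    · exact no_thr hok u.length (by omega) ⟨by simp at hlen ⊢; omega,
        fun i hi => hg i (by omega)⟩

/-! ### Plays against a fixed Ben strategy (acting on reversed words) -/

/-- marked history of Ann's moves `s` (latest first) -/
def hist (φ : List A → Option A) : List A → List (A × Bool)
  | [] => []
  | a :: s =>
    ((φ (a :: (hist φ s).map Prod.fst)).toList.map fun b => (b, false)) ++ (a, true) :: hist φ s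

def wd (φ : List A → Option A) (s : List A) : List A := (hist φ s).map Prod.fst

theorem wd_cons (φ : List A → Option A) (a : A) (s : List A) :
    wd φ (a :: s) = (φ (a :: wd φ s)).toList ++ a :: wd φ s := by
  simp [wd, hist, Function.comp_def]

def Val (φ : List A → Option A) : List A → Prop
  | [] => True
  | a :: s => AnnOk (wd φ s) a ∧ Val φ s

theorem ok_hist {φ : List A → Option A} (hφ : ∀ a v, φ (a :: v) ≠ some a) {s : List A}
    (hs : Val φ s) : Ok (hist φ s) := by
  induction s with
  | nil => trivial
  | cons a s ih =>
    have h1 : Ok ((a, true) :: hist φ s) := ⟨hs.1, ih hs.2⟩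
    rw [hist]
    cases hb : φ (a :: (hist φ s).map Prod.fst) with
    | none => simpa using h1
    | some b =>
      refine ⟨⟨a, _, rfl, ?_⟩, h1⟩
      rintro rfl
      exact hφ _ _ hb

/-- The word just after Ann's last move. -/
def tw (φ : List A → Option A) : List A → List A
  | [] => []
  | a :: s => a :: wd φ s

theorem tw_length (φ : List A → Option A) (s : List A) :
    (tw φ s).length ≤ 2 * s.length ∧ (wd φ s).length ≤ 2 * s.length
     ∧ (s ≠ [] → (tw φ s).length + 1 ≤ 2 * s.length) := by
  induction s with
  | nil => simp [tw, wd, hist]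
  | cons a s ih =>
    have : (φ (a :: wd φ s)).toList.length ≤ 1 := by
      cases φ (a :: wd φ s) <;> simp
    refine ⟨?_, ?_, fun _ => ?_⟩ <;> simp only [wd_cons, tw, List.length_append,
      List.length_cons] <;> omega

theorem tw_append (φ : List A → Option A) (s1 : List A) (a : A) (s : List A) :
    ∃ pre : List A, pre.length ≤ 2 * s1.length ∧ tw φ (s1 ++ a :: s) = pre ++ a :: wd φ s := by
  induction s1 with
  | nil => exact ⟨[], by simp, rfl⟩
  | cons c s2 ih =>
    obtain ⟨pre, h1, h2⟩ := ih
    have h3 : wd φ (s2 ++ a :: s) = (φ (tw φ (s2 ++ a :: s))).toList ++ tw φ (s2 ++ a :: s) := by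
      cases s2 with
      | nil => exact wd_cons φ a s
      | cons d s3 => exact wd_cons φ d _
    refine ⟨c :: ((φ (tw φ (s2 ++ a :: s))).toList ++ pre), ?_, ?_⟩
    · have : (φ (tw φ (s2 ++ a :: s))).toList.length ≤ 1 := by
        cases φ (tw φ (s2 ++ a :: s)) <;> simp
      simp only [List.length_append, List.length_cons]
      omega
    · change c :: wd φ (s2 ++ a :: s) = _
      rw [h3, h2]
      simp

theorem thr_letter {φ : List A → Option A} {s1 : List A} {a : A} {s : List A} {p : ℕ}
    (ht : Thr p (tw φ (s1 ++ a :: s))) (hp : 2 * s1.length + 2 ≤ p) :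
    some a = (wd φ s)[p - 1]? := by
  obtain ⟨pre, h1, h2⟩ := tw_append φ s1 a s
  rw [h2] at ht
  have := ht.2 pre.length (by omega)
  rw [List.getElem?_append_right (by omega), List.getElem?_append_right (by omega)] at this
  obtain ⟨q, rfl⟩ : ∃ q, p = q + 1 := ⟨p - 1, by omega⟩
  rw [Nat.add_sub_cancel_left, Nat.sub_self] at this
  simpa using this

theorem thr_inj {φ : List A → Option A} {p : ℕ} (j : ℕ) (hj : 2 * j ≤ p) :
    ∀ (s1 s1' r : List A), s1.length = j → s1'.length = j →
      Thr p (tw φ (s1 ++ r)) → Thr p (tw φ (s1' ++ r)) → s1 = s1' := by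
  induction j with
  | zero =>
    intro s1 s1' r h1 h2 _ _
    rw [List.length_eq_zero_iff.1 h1, List.length_eq_zero_iff.1 h2]
  | succ j ih =>
    intro s1 s1' r h1 h2 ht ht'
    rcases List.eq_nil_or_concat' s1 with rfl | ⟨s2, x, rfl⟩
    · simp at h1
    rcases List.eq_nil_or_concat' s1' with rfl | ⟨s2', x', rfl⟩
    · simp at h2
    simp only [List.length_append, List.length_singleton, Nat.add_right_cancel_iff] at h1 h2
    simp only [List.append_assoc, List.singleton_append] at ht ht'
    have hx := thr_letter ht (by omega)
    have hx' := thr_letter ht' (by omega)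
    have : x = x' := by
      rw [← hx'] at hx
      exact Option.some.inj hx
    subst this
    rw [ih (by omega) s2 s2' (x :: r) h1 h2 ht ht']

section Count

variable [Fintype A]

noncomputable def cand (φ : List A → Option A) (T : Finset (List A)) : Finset (List A) :=
  T.biUnion fun s => (Finset.univ.filter fun a => Allowed (wd φ s) a).image (· :: s)

noncomputable def S (φ : List A → Option A) : ℕ → Finset (List A)
  | 0 => {[]}
  | n + 1 => (cand φ (S φ n)).filter fun t => ∀ p, 6 ≤ p → ¬ Thr p (tw φ t)

theorem mem_cand {φ : List A → Option A} {T : Finset (List A)} {t : List A} :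
    t ∈ cand φ T ↔ ∃ a s, t = a :: s ∧ s ∈ T ∧ Allowed (wd φ s) a := by
  simp only [cand, Finset.mem_biUnion, Finset.mem_image, Finset.mem_filter, Finset.mem_univ,
    true_and]
  constructor
  · rintro ⟨s, hs, a, ha, rfl⟩; exact ⟨a, s, rfl, hs, ha⟩
  · rintro ⟨a, s, rfl, hs, ha⟩; exact ⟨s, hs, a, ha, rfl⟩

theorem S_prop {φ : List A → Option A} (n : ℕ) : ∀ s ∈ S φ n, s.length = n ∧ Val φ s := by
  induction n with
  | zero => intro s hs; simp [S] at hs; subst hs; exact ⟨rfl, trivial⟩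
  | succ n ih =>
    intro t ht
    rw [S, Finset.mem_filter, mem_cand] at ht
    obtain ⟨⟨a, s, rfl, hs, ha⟩, h2⟩ := ht
    exact ⟨by simp [(ih s hs).1], ⟨ha, h2⟩, (ih s hs).2⟩

theorem S_drop {φ : List A → Option A} (n k : ℕ) :
    ∀ s ∈ S φ (n + k), s.drop k ∈ S φ n := by
  induction k with
  | zero => intro s hs; simpa using hs
  | succ k ih =>
    intro t ht
    rw [← add_assoc, S, Finset.mem_filter, mem_cand] at ht
    obtain ⟨⟨a, s, rfl, hs, ha⟩, h2⟩ := ht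
    simpa using ih s hs

theorem card_allowed (hA : Fintype.card A = 6) (w : List A) :
    3 ≤ (Finset.univ.filter fun a => Allowed w a).card := by
  have key : ∀ o : Option A, (Finset.univ.filter fun a : A => some a = o).card ≤ 1 := by
    intro o
    rw [Finset.card_le_one]
    intro a ha b hb
    simp only [Finset.mem_filter, Finset.mem_univ, true_and] at ha hb
    exact Option.some.inj (ha.trans hb.symm)
  have hsub : (Finset.univ : Finset A) ⊆ (Finset.univ.filter fun a => Allowed w a) ∪
      ((Finset.univ.filter fun a : A => some a = w[0]?) ∪
      ((Finset.univ.filter fun a : A => some a = w[1]?) ∪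
      (Finset.univ.filter fun a : A => some a = third w))) := by
    intro a _
    simp only [Finset.mem_union, Finset.mem_filter, Finset.mem_univ, true_and]
    unfold Allowed
    tauto
  have h1 := Finset.card_le_card hsub
  rw [Finset.card_univ, hA] at h1
  have h2 := h1.trans (Finset.card_union_le _ _)
  have h3 := Finset.card_union_le (Finset.univ.filter fun a : A => some a = w[0]?)
    ((Finset.univ.filter fun a : A => some a = w[1]?) ∪
      (Finset.univ.filter fun a : A => some a = third w))
  have h4 := Finset.card_union_le (Finset.univ.filter fun a : A => some a = w[1]?)
      (Finset.univ.filter fun a : A => some a = third w)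
  have k1 := key w[0]?
  have k2 := key w[1]?
  have k3 := key (third w)
  omega

theorem card_cand (hA : Fintype.card A = 6) (φ : List A → Option A) (T : Finset (List A)) :
    3 * T.card ≤ (cand φ T).card := by
  rw [cand, Finset.card_biUnion]
  · rw [mul_comm, ← smul_eq_mul]
    apply Finset.card_nsmul_le_sum
    intro s _
    rw [Finset.card_image_of_injective _ (fun a b h => (List.cons.inj h).1)]
    exact card_allowed hA _
  · intro s _ s' _ hne
    simp only [Function.onFun]
    rw [Finset.disjoint_left]
    intro t ht ht'
    simp only [Finset.mem_image] at ht ht'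
    obtain ⟨a, -, rfl⟩ := ht
    obtain ⟨b, -, h⟩ := ht'
    exact hne (List.cons.inj h).2.symm

noncomputable def B (φ : List A → Option A) (n p : ℕ) : Finset (List A) :=
  (cand φ (S φ n)).filter fun t => Thr p (tw φ t)

theorem card_B (φ : List A → Option A) (m j p : ℕ) (hj : 2 * (j + 1) ≤ p) :
    (B φ (m + j) p).card ≤ (S φ m).card := by
  have hlen : ∀ t ∈ B φ (m + j) p, t.length = m + j + 1 := by
    intro t ht
    rw [B, Finset.mem_filter, mem_cand] at ht
    obtain ⟨⟨a, s, rfl, hs, ha⟩, h2⟩ := ht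
    simp [(S_prop _ s hs).1]
  apply Finset.card_le_card_of_injOn (fun t => t.drop (j + 1))
  · intro t ht
    rw [Finset.mem_coe, B, Finset.mem_filter, mem_cand] at ht
    obtain ⟨⟨a, s, rfl, hs, ha⟩, h2⟩ := ht
    simpa using S_drop m j s hs
  · intro t ht t' ht' heq
    simp only at heq
    have l1 := hlen t ht
    have l2 := hlen t' ht'
    have a1 := (Finset.mem_filter.1 ht).2
    have a2 := (Finset.mem_filter.1 ht').2
    rw [← List.take_append_drop (j + 1) t] at a1
    rw [← List.take_append_drop (j + 1) t', ← heq] at a2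
    have := thr_inj (j + 1) hj (t.take (j + 1)) (t'.take (j + 1)) (t.drop (j + 1))
      (by simp; omega) (by simp; omega) a1 a2
    rw [← List.take_append_drop (j + 1) t, ← List.take_append_drop (j + 1) t', ← heq, this]

theorem card_step (hA : Fintype.card A = 6) (φ : List A → Option A) (n : ℕ) :
    3 * (S φ n).card ≤ (S φ (n + 1)).card
      + 2 * ∑ m ∈ Finset.range (n - 1), (S φ m).card := by
  refine (card_cand hA φ (S φ n)).trans ?_
  have hsub : cand φ (S φ n) ⊆ S φ (n + 1) ∪ (Finset.range (n - 1)).biUnion fun m =>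
      B φ n (2 * (n - m + 1)) ∪ B φ n (2 * (n - m + 1) + 1) := by
    intro t ht
    by_cases h : ∀ p, 6 ≤ p → ¬ Thr p (tw φ t)
    · exact Finset.mem_union_left _ (by rw [S, Finset.mem_filter]; exact ⟨ht, h⟩)
    push Not at h
    obtain ⟨p, hp, hthr⟩ := h
    apply Finset.mem_union_right
    have hlen : t.length = n + 1 := by
      obtain ⟨a, s, rfl, hs, ha⟩ := mem_cand.1 ht
      simp [(S_prop _ s hs).1]
    have h1 := hthr.1
    have h2 := (tw_length φ t).1
    rw [Finset.mem_biUnion]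
    refine ⟨n + 1 - p / 2, by rw [Finset.mem_range]; omega, ?_⟩
    rw [Finset.mem_union, B, B, Finset.mem_filter, Finset.mem_filter]
    rcases Nat.even_or_odd' p with ⟨k, hk | hk⟩
    · left
      refine ⟨ht, ?_⟩
      convert hthr using 1
      omega
    · right
      refine ⟨ht, ?_⟩
      convert hthr using 1
      omega
  refine (Finset.card_le_card hsub).trans ((Finset.card_union_le _ _).trans ?_)
  gcongr
  refine Finset.card_biUnion_le.trans ?_
  rw [Finset.mul_sum]
  apply Finset.sum_le_sum
  intro m hm
  rw [Finset.mem_range] at hm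
  refine (Finset.card_union_le _ _).trans ?_
  have h1 := card_B φ m (n - m) (2 * (n - m + 1)) le_rfl
  have h2 := card_B φ m (n - m) (2 * (n - m + 1) + 1) (by omega)
  rw [show m + (n - m) = n by omega] at h1 h2
  omega

theorem growth (hA : Fintype.card A = 6) (φ : List A → Option A) (n : ℕ) :
    4 * (∑ m ∈ Finset.range n, (S φ m).card) ≤ 3 * (S φ n).card ∧
      7 * (S φ n).card ≤ 3 * (S φ (n + 1)).card := by
  induction n with
  | zero =>
    have := card_step hA φ 0
    simp at this ⊢
    omega
  | succ n ih =>
    have h := card_step hA φ (n + 1)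
    rw [Nat.add_sub_cancel] at h
    rw [Finset.sum_range_succ]
    omega

theorem S_nonempty (hA : Fintype.card A = 6) (φ : List A → Option A) (n : ℕ) :
    (S φ n).Nonempty := by
  rw [← Finset.card_pos]
  induction n with
  | zero => simp [S]
  | succ n ih => have := (growth hA φ n).2; omega

end Count

/-! ### Determinacy -/

/-- Ann can survive `n` rounds from the (reversed) word `w`. -/
def V : ℕ → List A → Prop
  | 0, w => SquareFree w
  | n + 1, w => ∃ a, ∀ b : Option A, b ≠ some a → V n (b.toList ++ a :: w)

theorem SquareFree.of_append {l w : List A} (h : SquareFree (l ++ w)) : SquareFree w :=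
  fun u hu hi => h u hu (hi.trans (List.suffix_append l w).isInfix)

theorem V_mono (n : ℕ) : ∀ w : List A, V (n + 1) w → V n w := by
  induction n with
  | zero =>
    rintro w ⟨a, h⟩
    have := h none (by simp)
    exact SquareFree.of_append (l := [a]) this
  | succ n ih =>
    rintro w ⟨a, h⟩
    exact ⟨a, fun b hb => ih _ (h b hb)⟩

theorem V_anti {m n : ℕ} (h : m ≤ n) (w : List A) : V n w → V m w := by
  induction h with
  | refl => exact id
  | step _ ih => exact fun h => ih (V_mono _ _ h)

/-- Ben's options after which Ann loses within `k` rounds. -/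
def Kill (v : List A) (k : ℕ) : Prop :=
  ∃ b : Option A, b ≠ v.head? ∧ ¬ V k (b.toList ++ v)

noncomputable def killer (v : List A) : Option A :=
  if h : ∃ k, Kill v k then (Nat.find_spec h).choose else none

theorem killer_ne (a : A) (v : List A) : killer (a :: v) ≠ some a := by
  unfold killer
  split_ifs with h
  · exact (Nat.find_spec h).choose_spec.1
  · simp

theorem killer_spec {v : List A} {k : ℕ} (h : Kill v k) :
    ¬ V k ((killer v).toList ++ v) := by
  have hex : ∃ k, Kill v k := ⟨k, h⟩
  unfold killer
  rw [dif_pos hex]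
  exact fun hV => (Nat.find_spec hex).choose_spec.2 (V_anti (Nat.find_min' hex h) _ hV)

theorem not_V_step {n : ℕ} {w : List A} (h : ¬ V (n + 1) w) (a : A) :
    ¬ V n ((killer (a :: w)).toList ++ a :: w) := by
  apply killer_spec
  by_contra hk
  refine h ⟨a, fun b hb => ?_⟩
  by_contra hV
  exact hk ⟨b, by simpa using hb, hV⟩

theorem not_V_play (n : ℕ) (s : List A) : ¬ V (n + s.length) ([] : List A) →
    ¬ V n (wd killer s) := by
  induction s generalizing n with
  | nil => simp [wd, hist]
  | cons a s ih =>
    intro h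
    rw [wd_cons]
    apply not_V_step
    apply ih
    rw [List.length_cons, ← add_assoc] at h
    rwa [add_right_comm]

theorem V_all [Fintype A] (hA : Fintype.card A = 6) (n : ℕ) : V n ([] : List A) := by
  by_contra h
  obtain ⟨s, hs⟩ := S_nonempty hA killer n
  obtain ⟨h1, h2⟩ := S_prop n s hs
  have h3 := ok_squareFree (ok_hist killer_ne h2)
  exact not_V_play 0 s (by rw [h1, zero_add]; exact h) h3

theorem V_inf_step [Finite A] {w : List A} (h : ∀ n, V n w) :
    ∃ a, ∀ b : Option A, b ≠ some a → ∀ n, V n (b.toList ++ a :: w) := by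
  by_contra hc
  push Not at hc
  choose b hb n hn using hc
  obtain ⟨N, hN⟩ : ∃ N, ∀ a, n a ≤ N := by
    obtain ⟨N, hN⟩ := (Set.finite_range n).bddAbove
    exact ⟨N, fun a => hN ⟨a, rfl⟩⟩
  obtain ⟨a, ha⟩ := h (N + 1)
  exact hn a (V_anti (hN a) _ (ha (b a) (hb a)))

theorem SquareFree.reverse {w : List A} (h : SquareFree w.reverse) : SquareFree w := by
  intro u hu hi
  refine h u.reverse (by simpa using hu) ?_
  rw [← List.reverse_append]
  exact List.reverse_infix.2 hi

end HardGame

/-- Over an alphabet with exactly 6 letters, Ann has a winning strategy for the hard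
game: there is an Ann strategy `ψ` such that against every Ben strategy `φ` (which on a
nonempty word never plays its last letter, but may skip), every word arising in the play
is square-free; consequently the shared word becomes arbitrarily long without a square
ever appearing. -/
theorem stmt_2 (A : Type*) [Fintype A] (hA : Fintype.card A = 6) :
    ∃ ψ : List A → A, ∀ φ : List A → Option A,
      (∀ v : List A, v ≠ [] → φ v ≠ v.getLast?) →
      (∀ k : ℕ, SquareFree (playH ψ φ k)) ∧
      (∀ N : ℕ, ∃ k : ℕ, N ≤ (playH ψ φ k).length) := by
  classical
  have hne : Nonempty A := Fintype.card_pos_iff.1 (by omega)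
  have hex : ∀ w : List A, ∃ a : A, (∀ n, HardGame.V n w.reverse) →
      ∀ b : Option A, b ≠ some a → ∀ n, HardGame.V n (b.toList ++ a :: w.reverse) := by
    intro w
    by_cases h : ∀ n, HardGame.V n w.reverse
    · obtain ⟨a, ha⟩ := HardGame.V_inf_step h
      exact ⟨a, fun _ => ha⟩
    · exact ⟨hne.some, fun h' => absurd h' h⟩
  choose ψ hψ using hex
  refine ⟨ψ, fun φ hφ => ?_⟩
  have hodd : ∀ k, playH ψ φ (2 * k + 1) = playH ψ φ (2 * k) ++ [ψ (playH ψ φ (2 * k))] := by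
    intro k
    rw [playH]
    simp
  have heven : ∀ k, playH ψ φ (2 * (k + 1)) =
      playH ψ φ (2 * k + 1) ++ (φ (playH ψ φ (2 * k + 1))).toList := by
    intro k
    rw [show 2 * (k + 1) = (2 * k + 1) + 1 by ring, playH]
    simp
  have hV : ∀ k n, HardGame.V n (playH ψ φ (2 * k)).reverse := by
    intro k
    induction k with
    | zero => intro n; simpa [playH] using HardGame.V_all hA n
    | succ k ih =>
      have h1 := hψ _ ih (φ (playH ψ φ (2 * k + 1))) (by
        have := hφ (playH ψ φ (2 * k + 1)) (by rw [hodd]; simp)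
        conv at this => rhs; rw [hodd]
        simpa using this)
      intro n
      rw [heven]
      have h2 := h1 n
      have h3 : ∀ o : Option A, o.toList.reverse = o.toList := by
        intro o; cases o <;> rfl
      rw [List.reverse_append, h3, hodd, List.reverse_append]
      rw [hodd] at h2
      exact h2
  refine ⟨fun k => ?_, fun N => ⟨2 * N, ?_⟩⟩
  · apply HardGame.SquareFree.reverse
    rcases Nat.even_or_odd' k with ⟨m, rfl | rfl⟩
    · exact hV m 0
    · rw [hodd, List.reverse_append]
      exact hψ _ (hV m) none (by simp) 0
  · induction N with
    | zero => simp
    | succ N ih =>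
      rw [heven, hodd]
      simp only [List.length_append, List.length_singleton]
      omega
end

section
/- Let A be a finite alphabet with at least 7 letters. Then Ann has a winning strategy for the hard game over A: there exists an Ann strategy ψ such that for every Ben strategy φ (a function from nonempty words over A to A ∪ {ε} with φ(v) never equal to the last letter of v), every word arising in the play between ψ and φ is square-free. -/
namespace HardGame

open Classical in
/-- Reversed words: length of the longest run (at the head) that agrees with its shift by `k+1`. -/
noncomputable def run {A : Type*} (k : ℕ) : List A → ℕ
  | [] => 0
  | x :: t => if t[k]? = some x then run k t + 1 else 0

/-- Danger of the period `k+1`. -/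
noncomputable def wt {A : Type*} (k : ℕ) (v : List A) : ℚ := (2 / 5) ^ ((k + 2 - run k v) / 2)

noncomputable def pot {A : Type*} (v : List A) : ℚ := ∑ k ∈ Finset.range v.length, wt k v

open Classical in
noncomputable def dng {A : Type*} (a : A) (v : List A) : ℚ :=
  ∑ k ∈ Finset.range v.length, if v[k]? = some a then wt k v else 0

def Good {A : Type*} (v : List A) : Prop := (∀ k, run k v ≤ k) ∧ pot v < 14 / 5

def fresh (k : ℕ) : ℚ := (2 / 5) ^ (max 1 ((k + 1) / 2))

lemma wt_pos {A : Type*} (k : ℕ) (v : List A) : 0 < wt k v := by unfold wt; positivity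

lemma fresh_pos (k : ℕ) : 0 < fresh k := by unfold fresh; positivity

lemma sum_fresh_odd (n : ℕ) :
    ∑ k ∈ Finset.range (2 * n + 1), fresh k = 2 / 5 + 4 / 3 * (1 - (2 / 5) ^ n) := by
  induction n with
  | zero => simp [fresh]
  | succ n ih =>
    rw [show 2 * (n + 1) + 1 = 2 * n + 1 + 1 + 1 by ring, Finset.sum_range_succ,
      Finset.sum_range_succ, ih]
    have h1 : fresh (2 * n + 1) = (2 / 5) ^ (n + 1) := by
      unfold fresh; congr 1; omega
    have h2 : fresh (2 * n + 1 + 1) = (2 / 5) ^ (n + 1) := by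
      unfold fresh; congr 1; omega
    rw [h1, h2]; ring

lemma sum_fresh (n : ℕ) : ∑ k ∈ Finset.range n, fresh k ≤ 26 / 15 := by
  have h : ∑ k ∈ Finset.range n, fresh k ≤ ∑ k ∈ Finset.range (2 * n + 1), fresh k :=
    Finset.sum_le_sum_of_subset_of_nonneg (by intro x; simp; omega)
      (fun k _ _ => (fresh_pos k).le)
  rw [sum_fresh_odd] at h
  have : (0 : ℚ) < (2 / 5) ^ n := by positivity
  linarith

lemma run_of_match {A : Type*} (k n : ℕ) : ∀ v : List A, n ≤ v.length →
    (∀ i < n, v[i + (k + 1)]? = v[i]?) → n ≤ run k v := by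
  induction n with
  | zero => intros; omega
  | succ n ih =>
    intro v hv h
    cases v with
    | nil => simp at hv
    | cons x t =>
      have h0 := h 0 (by omega)
      simp at h0
      have := ih t (by simpa using hv) (fun i hi => by
        have := h (i + 1) (by omega)
        rw [show i + 1 + (k + 1) = (i + (k + 1)) + 1 by ring] at this
        simpa using this)
      simp only [run, h0, if_true]; omega

lemma sf_append {A : Type*} (w : List A) (x : A) (hw : SquareFree w)
    (h : ∀ k, run k (x :: w.reverse) ≤ k) : SquareFree (w ++ [x]) := by
  intro u hu hin
  obtain ⟨s, t, hst⟩ := hin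
  rcases List.eq_nil_or_concat t with rfl | ⟨t', y, rfl⟩
  · have hr := congrArg List.reverse hst
    simp at hr
    have hl : 0 < u.length := List.length_pos_iff.2 hu
    have := run_of_match (u.length - 1) u.length (x :: w.reverse) (by
        rw [← hr]; simp) (by
      intro i hi
      rw [show i + (u.length - 1 + 1) = u.length + i by omega, ← hr]
      rw [List.getElem?_append_right (by simp), List.getElem?_append_left (by simp; omega),
        List.getElem?_append_left (by simp; omega)]
      simp)
    have := h (u.length - 1)
    omega
  · apply hw u hu
    refine ⟨s, t', ?_⟩
    have : (s ++ (u ++ u) ++ t') ++ [y] = w ++ [x] := by rw [← hst]; simp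
    exact (List.append_inj' this rfl).1

open Classical in
lemma step {A : Type*} (v v' : List A) (a : A) (hv : Good v) (hd : dng a v < 2 / 5)
    (h : ∀ k, run k v' ≤ if v[k]? = some a then run k v + 2 else min 1 k) : Good v' := by
  have hm : ∀ k, v[k]? = some a → run k v + 2 ≤ k := by
    intro k hk
    have hkl : k < v.length := (List.getElem?_eq_some_iff.1 hk).1
    have hw : wt k v < 2 / 5 := by
      refine lt_of_le_of_lt ?_ hd
      have := Finset.single_le_sum (f := fun k => if v[k]? = some a then wt k v else 0)
        (s := Finset.range v.length) (fun i _ => by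
          split_ifs
          · exact (wt_pos i v).le
          · exact le_rfl) (Finset.mem_range.2 hkl)
      simpa [hk, dng] using this
    by_contra hc
    have : (2 / 5 : ℚ) ^ 1 ≤ wt k v := by
      unfold wt
      apply pow_le_pow_of_le_one <;> first | norm_num | skip
      omega
    linarith
  refine ⟨fun k => ?_, ?_⟩
  · have h1 := h k
    split_ifs at h1 with hk
    · have := hm k hk; omega
    · omega
  · have key : ∀ k, wt k v' ≤ 5 / 2 * (if v[k]? = some a then wt k v else 0) + fresh k := by
      intro k
      have h1 := h k
      have hf := fresh_pos k
      split_ifs at h1 ⊢ with hk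
      · have h2 := hm k hk
        have : wt k v' ≤ 5 / 2 * wt k v := by
          unfold wt
          obtain ⟨e, he⟩ : ∃ e, (k + 2 - run k v) / 2 = e + 1 :=
            ⟨(k + 2 - run k v) / 2 - 1, by omega⟩
          rw [he, pow_succ]
          have : (2 / 5 : ℚ) ^ ((k + 2 - run k v') / 2) ≤ (2 / 5) ^ e := by
            apply pow_le_pow_of_le_one <;> first | norm_num | skip
            omega
          linarith
        linarith
      · have : wt k v' ≤ fresh k := by
          unfold wt fresh
          apply pow_le_pow_of_le_one <;> first | norm_num | skip
          omega
        linarith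
    have hs : pot v' ≤ 5 / 2 * (∑ k ∈ Finset.range v'.length,
        if v[k]? = some a then wt k v else 0) + ∑ k ∈ Finset.range v'.length, fresh k := by
      unfold pot
      rw [Finset.mul_sum, ← Finset.sum_add_distrib]
      exact Finset.sum_le_sum (fun k _ => key k)
    have hs2 : (∑ k ∈ Finset.range v'.length, if v[k]? = some a then wt k v else 0)
        ≤ dng a v := by
      unfold dng
      rw [← Finset.sum_filter_ne_zero]
      refine Finset.sum_le_sum_of_subset_of_nonneg ?_ ?_
      · intro k hk
        rw [Finset.mem_filter] at hk
        rw [Finset.mem_range]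
        by_contra hc
        apply hk.2
        rw [List.getElem?_eq_none (by omega)]
        simp
      · intro k _ _
        split_ifs
        · exact (wt_pos k v).le
        · exact le_rfl
    have := sum_fresh v'.length
    linarith

lemma step_skip {A : Type*} (v : List A) (a : A) (hv : Good v) (hd : dng a v < 2 / 5) :
    Good (a :: v) := by
  refine step v _ a hv hd (fun k => ?_)
  simp only [run]
  split_ifs <;> omega

lemma step_ben {A : Type*} (v : List A) (a b : A) (hab : b ≠ a) (hv : Good v)
    (hd : dng a v < 2 / 5) : Good (b :: a :: v) := by
  refine step v _ a hv hd (fun k => ?_)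
  rcases k with _ | k
  · have : ¬ (a = b) := fun h => hab h.symm
    simp [run, this]
  · simp only [run]
    split_ifs <;> omega

lemma exists_move {A : Type*} [Fintype A] (hA : 7 ≤ Fintype.card A) (v : List A)
    (hv : Good v) : ∃ a, dng a v < 2 / 5 := by
  classical
  by_contra! hc
  have h1 : ∑ a : A, dng a v = pot v := by
    unfold dng pot
    rw [Finset.sum_comm]
    refine Finset.sum_congr rfl (fun k hk => ?_)
    rw [List.getElem?_eq_getElem (Finset.mem_range.1 hk)]
    simp
  have h2 : ∑ _a : A, (2 / 5 : ℚ) ≤ ∑ a : A, dng a v := Finset.sum_le_sum (fun a _ => hc a)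
  simp at h2
  have h3 : (7 : ℚ) ≤ Fintype.card A := by exact_mod_cast hA
  have := hv.2
  linarith

end HardGame

open HardGame in
theorem stmt_3 (A : Type*) [Fintype A] (hA : 7 ≤ Fintype.card A) :
    ∃ ψ : List A → A, ∀ φ : List A → Option A,
      (∀ v : List A, v ≠ [] → φ v ≠ v.getLast?) →
      ∀ k : ℕ, SquareFree (playH ψ φ k) := by
  classical
  have hne : Nonempty A := Fintype.card_pos_iff.1 (by omega)
  have hψ : ∀ w : List A, ∃ a, Good w.reverse → dng a w.reverse < 2 / 5 := by
    intro w
    by_cases hw : Good w.reverse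
    · obtain ⟨a, ha⟩ := exists_move hA _ hw
      exact ⟨a, fun _ => ha⟩
    · exact ⟨hne.some, fun h => absurd h hw⟩
  choose ψ hψ using hψ
  refine ⟨ψ, fun φ hφ k => ?_⟩
  have inv : ∀ k, SquareFree (playH ψ φ k) ∧
      (Even k → Good (playH ψ φ k).reverse) ∧
      (¬ Even k → ∃ w a, playH ψ φ k = w ++ [a] ∧ Good w.reverse ∧ dng a w.reverse < 2 / 5) := by
    intro k
    induction k with
    | zero =>
      refine ⟨?_, fun _ => ?_, fun h => absurd (by simp) h⟩
      · intro u hu h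
        simp [playH] at h
        exact hu h
      · simp [playH, Good, run, pot]
    | succ k ih =>
      obtain ⟨hsf, he, ho⟩ := ih
      by_cases hk : Even k
      · have hg := he hk
        have hd := hψ _ hg
        have hp : playH ψ φ (k + 1) = playH ψ φ k ++ [ψ (playH ψ φ k)] := by
          simp [playH, hk]
        rw [hp]
        refine ⟨sf_append _ _ hsf (step_skip _ _ hg hd).1,
          fun h => absurd hk (Nat.even_add_one.1 h), fun _ => ⟨_, _, rfl, hg, hd⟩⟩
      · obtain ⟨w, a, hw, hg, hd⟩ := ho hk
        have hp : playH ψ φ (k + 1) = playH ψ φ k ++ (φ (playH ψ φ k)).toList := by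
          simp [playH, hk]
        have hb := hφ (w ++ [a]) (by simp)
        rw [hp]
        rw [hw] at hsf ⊢
        refine ⟨?_, fun _ => ?_, fun h => absurd (Nat.even_add_one.2 hk) h⟩
        · cases hc : φ (w ++ [a]) with
          | none => simpa using hsf
          | some b =>
            rw [hc] at hb
            have hba : b ≠ a := by simpa using hb
            apply sf_append _ _ hsf
            simpa using (step_ben _ a b hba hg hd).1
        · cases hc : φ (w ++ [a]) with
          | none => simpa using step_skip _ _ hg hd
          | some b =>
            rw [hc] at hb
            have hba : b ≠ a := by simpa using hb
            simpa using step_ben _ a b hba hg hd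
  exact (inv k).1
end

section
/- Let α = 12914/6541 and γ = 10635/4441. Assume (C_w)_{w∈Λ} are nonnegative real numbers such that for every v ∈ Λ, C_v ≤ 10635, either C_v = 0 or C_v ≥ 4441, and α·C_v ≤ min_{a∈A} Σ_{b∈A, vab ∈ S^{≤p}_free} C_{Λ(vab)}. Fix any Ben strategy φ, and let S_n and the weights Ŝ_n be defined from φ and (C_w) as in the context. Let β > 1 be a real number such that α − 2γ·β^{(3−p)/2}/(β−1) ≥ β. Then for all n ≥ 1, Ŝ_{n+1} ≥ β·Ŝ_n. -/
open scoped Classical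

/-- `w` contains a factor that is a square of period between `lo` and `hi`. -/
def HasSq {A : Type*} (lo hi : ℕ) (w : List A) : Prop :=
  ∃ u : List A, lo ≤ u.length ∧ u.length ≤ hi ∧ (u ++ u) <:+: w

/-- `w` is a square of period between `lo` and `hi`. -/
def IsSq {A : Type*} (lo hi : ℕ) (w : List A) : Prop :=
  ∃ u : List A, lo ≤ u.length ∧ u.length ≤ hi ∧ w = u ++ u

/-- `w` is a minimal square of period between `lo` and `hi`: it is such a square and no
proper factor of it is such a square. -/
def MinSq {A : Type*} (lo hi : ℕ) (w : List A) : Prop :=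
  IsSq lo hi w ∧ ∀ f : List A, f <:+: w → f ≠ w → ¬ IsSq lo hi f

/-- A word is normalized if it is lexicographically least among its images under
permutations of the alphabet. -/
def Normalized {A : Type*} [LinearOrder A] (w : List A) : Prop :=
  ∀ π : Equiv.Perm A, ¬ List.Lex (· < ·) (w.map π) w

/-- `Λ`: the set of normalized words that are proper prefixes of minimal squares of
period between `lo` and `hi`. -/
def Lam {A : Type*} [LinearOrder A] (lo hi : ℕ) : Set (List A) :=
  {w | Normalized w ∧ ∃ s : List A, MinSq lo hi s ∧ w <+: s ∧ w ≠ s}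

/-- `Λ(w)`: the longest element of `Λ` that is, up to a permutation of the alphabet,
a suffix of `w`. -/
noncomputable def lamOf {A : Type*} [LinearOrder A] (lo hi : ℕ) (w : List A) : List A :=
  if h : ∃ v : List A,
      (v ∈ Lam lo hi ∧ ∃ π : Equiv.Perm A, v.map π <:+ w) ∧
      ∀ v' : List A, (v' ∈ Lam lo hi ∧ ∃ π : Equiv.Perm A, v'.map π <:+ w) →
        v'.length ≤ v.length
  then h.choose else []

/-- A `2⁻`-power: a word of length at least 3 that becomes a square after appending
a suitable letter. -/
def TwoMinusPower {A : Type*} (v : List A) : Prop :=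
  3 ≤ v.length ∧ ∃ a : A, ∃ u : List A, u ≠ [] ∧ v ++ [a] = u ++ u

/-- `w` ends with a `2⁻`-power. -/
def EndsWithTMP {A : Type*} (w : List A) : Prop :=
  ∃ v : List A, v <:+ w ∧ TwoMinusPower v

/-- The conditions required of every word obtained just after one of Ann's moves in
the nonrepetitive game over `Fin 4`: it contains no square of period at least 2, its
weight `C_{Λ(u)}` is positive, and it does not end with a `2⁻`-power. -/
def GoodNR (C : List (Fin 4) → ℝ) (u : List (Fin 4)) : Prop :=
  (∀ x : List (Fin 4), 2 ≤ x.length → ¬ (x ++ x) <:+: u) ∧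
  0 < C (lamOf 2 15 u) ∧ ¬ EndsWithTMP u

/-- The playable words for Ann in the nonrepetitive game over `Fin 4` against Ben's
strategy `φ`: words produced by a sequence of Ann moves (Ann plays first, then after
each word `v` left by Ann, Ben appends `φ v` and Ann answers with some letter `a`)
all of whose intermediate words after Ann's moves satisfy `GoodNR`. -/
inductive PlayableNR (φ : List (Fin 4) → Fin 4) (C : List (Fin 4) → ℝ) :
    List (Fin 4) → Prop
  | base (a : Fin 4) : GoodNR C [a] → PlayableNR φ C [a]
  | step {v : List (Fin 4)} (a : Fin 4) :
      PlayableNR φ C v → GoodNR C (v ++ [φ v, a]) → PlayableNR φ C (v ++ [φ v, a])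

/-- `S_n`: the set of playable words of length `2n - 1`. -/
def SsetNR (φ : List (Fin 4) → Fin 4) (C : List (Fin 4) → ℝ) (n : ℕ) :
    Set (List (Fin 4)) :=
  {v | PlayableNR φ C v ∧ v.length = 2 * n - 1}

/-- `Ŝ_n = Σ_{w ∈ Λ} C_w · |{u ∈ S_n : Λ(u) = w}| = Σ_{v ∈ S_n} C_{Λ(v)}`. -/
noncomputable def ShatNR (φ : List (Fin 4) → Fin 4) (C : List (Fin 4) → ℝ) (n : ℕ) : ℝ :=
  ∑ᶠ v ∈ SsetNR φ C n, C (lamOf 2 15 v)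


namespace NRaux

abbrev Wd := List (Fin 4)

/-- `t` is in `Λ` and is, up to a permutation, a suffix of `w`. -/
def Cand (w t : Wd) : Prop := t ∈ Lam 2 15 ∧ ∃ π : Equiv.Perm (Fin 4), t.map π <:+ w

noncomputable def pick (P : Wd → Prop) : Wd :=
  if h : ∃ v : Wd, P v ∧ ∀ v' : Wd, P v' → v'.length ≤ v.length then h.choose else []

lemma lamOf_eq_pick (w : Wd) : lamOf 2 15 w = pick (Cand w) := rfl

lemma lamOf_congr {w w' : Wd} (h : ∀ t, Cand w t ↔ Cand w' t) : lamOf 2 15 w = lamOf 2 15 w' := by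
  rw [lamOf_eq_pick, lamOf_eq_pick, show Cand w = Cand w' from funext fun t => propext (h t)]

lemma map_symm_map (π : Equiv.Perm (Fin 4)) (w : Wd) : (w.map π).map π.symm = w := by
  simp

lemma cand_map {w t : Wd} (π : Equiv.Perm (Fin 4)) (h : Cand w t) : Cand (w.map π) t := by
  obtain ⟨h1, σ, h2⟩ := h
  refine ⟨h1, σ.trans π, ?_⟩
  have := h2.map π
  simpa using this

lemma lamOf_map (π : Equiv.Perm (Fin 4)) (w : Wd) : lamOf 2 15 (w.map π) = lamOf 2 15 w := by
  apply lamOf_congr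
  intro t
  constructor
  · intro h
    have := cand_map π.symm h
    rwa [map_symm_map] at this
  · exact cand_map π

lemma isSq_map {w : Wd} (π : Equiv.Perm (Fin 4)) (h : IsSq 2 15 w) : IsSq 2 15 (w.map π) := by
  obtain ⟨u, h1, h2, rfl⟩ := h
  exact ⟨u.map π, by simpa using h1, by simpa using h2, by simp⟩

lemma hasSq_map {w : Wd} (π : Equiv.Perm (Fin 4)) (h : HasSq 2 15 w) : HasSq 2 15 (w.map π) := by
  obtain ⟨u, h1, h2, h3⟩ := h
  exact ⟨u.map π, by simpa using h1, by simpa using h2, by simpa using h3.map π⟩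

lemma hasSq_map_iff {w : Wd} (π : Equiv.Perm (Fin 4)) : HasSq 2 15 (w.map π) ↔ HasSq 2 15 w := by
  constructor
  · intro h
    have := hasSq_map π.symm h
    rwa [map_symm_map] at this
  · exact hasSq_map π

lemma minSq_map {w : Wd} (π : Equiv.Perm (Fin 4)) (h : MinSq 2 15 w) : MinSq 2 15 (w.map π) := by
  refine ⟨isSq_map π h.1, fun f hf hne hs => ?_⟩
  have h1 := hf.map π.symm
  rw [map_symm_map] at h1
  refine h.2 _ h1 ?_ (isSq_map π.symm hs)
  intro h2
  apply hne
  rw [← h2]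
  simp

lemma hasSq_mono {w w' : Wd} (h : HasSq 2 15 w) (h' : w <:+: w') : HasSq 2 15 w' := by
  obtain ⟨u, h1, h2, h3⟩ := h
  exact ⟨u, h1, h2, h3.trans h'⟩

lemma isSq_hasSq {w : Wd} (h : IsSq 2 15 w) : HasSq 2 15 w := by
  obtain ⟨u, h1, h2, rfl⟩ := h
  exact ⟨u, h1, h2, List.infix_refl _⟩

lemma exists_minSq_aux (n : ℕ) : ∀ s : Wd, s.length = n → IsSq 2 15 s →
    ∃ t, MinSq 2 15 t ∧ t <:+: s := by
  induction n using Nat.strong_induction_on with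
  | _ n ih =>
    intro s hs hsq
    by_cases h : MinSq 2 15 s
    · exact ⟨s, h, List.infix_refl _⟩
    · have : ∃ f : Wd, f <:+: s ∧ f ≠ s ∧ IsSq 2 15 f := by
        by_contra hcon
        push Not at hcon
        exact h ⟨hsq, hcon⟩
      obtain ⟨f, hf, hne, hfs⟩ := this
      have hlt : f.length < n := by
        rcases lt_or_eq_of_le hf.length_le with h1 | h1
        · omega
        · exact absurd (hf.eq_of_length h1) hne
      obtain ⟨t, ht, htf⟩ := ih _ hlt f rfl hfs
      exact ⟨t, ht, htf.trans hf⟩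

lemma exists_minSq {w : Wd} (h : HasSq 2 15 w) : ∃ t, MinSq 2 15 t ∧ t <:+: w := by
  obtain ⟨u, h1, h2, h3⟩ := h
  obtain ⟨t, ht, hts⟩ := exists_minSq_aux _ (u ++ u) rfl ⟨u, h1, h2, rfl⟩
  exact ⟨t, ht, hts.trans h3⟩

lemma exists_normal (s' : Wd) : ∃ π : Equiv.Perm (Fin 4), Normalized (s'.map π) := by
  obtain ⟨π, -, hπ⟩ := Finset.exists_min_image (Finset.univ : Finset (Equiv.Perm (Fin 4)))
    (fun π => s'.map π) ⟨1, Finset.mem_univ _⟩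
  refine ⟨π, fun σ hlt => ?_⟩
  have h1 := hπ (π.trans σ) (Finset.mem_univ _)
  have h2 : s'.map (π.trans σ) = (s'.map π).map σ := by simp
  rw [h2] at h1
  exact absurd hlt (not_lt.mpr h1)

/-- A proper prefix of a minimal square is in `Λ` up to a permutation. -/
lemma exists_lam {s s' : Wd} (hs : MinSq 2 15 s) (hp : s' <+: s) (hne : s' ≠ s) :
    ∃ t ∈ Lam 2 15, ∃ σ : Equiv.Perm (Fin 4), t.map σ = s' := by
  obtain ⟨π, hπ⟩ := exists_normal s'
  refine ⟨s'.map π, ⟨hπ, s.map π, minSq_map π hs, hp.map π, ?_⟩, π.symm, map_symm_map _ _⟩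
  intro h
  exact hne (List.map_injective_iff.mpr π.injective h)

lemma nil_mem : ([] : Wd) ∈ Lam 2 15 := by
  obtain ⟨t, ht, -⟩ := exists_minSq (w := [0,1,0,1]) ⟨[0,1], by simp, by simp, by simp⟩
  refine ⟨fun π h => ?_, t, ht, List.nil_prefix, ?_⟩
  · simp at h
  · rintro rfl
    obtain ⟨u, h1, h2, h3⟩ := ht.1
    have := congrArg List.length h3
    simp at this
    omega

lemma lamOf_spec (w : Wd) : Cand w (lamOf 2 15 w) ∧
    ∀ v', Cand w v' → v'.length ≤ (lamOf 2 15 w).length := by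
  have h : ∃ v : Wd, Cand w v ∧ ∀ v' : Wd, Cand w v' → v'.length ≤ v.length := by
    have hne : ∃ n, ∃ v, Cand w v ∧ v.length = n := ⟨0, [], ⟨nil_mem, 1, by simp⟩, rfl⟩
    have hb : ∀ v, Cand w v → v.length ≤ w.length := by
      rintro v ⟨-, π, h⟩
      simpa using h.length_le
    obtain ⟨v, hv, hl⟩ := Nat.findGreatest_spec (P := fun n => ∃ v, Cand w v ∧ v.length = n)
      (n := w.length) (m := 0) (Nat.zero_le _) ⟨[], ⟨nil_mem, 1, by simp⟩, rfl⟩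
    refine ⟨v, hv, fun v' hv' => ?_⟩
    rw [hl]
    exact Nat.le_findGreatest (hb v' hv') ⟨v', hv', rfl⟩
  rw [lamOf_eq_pick, pick, dif_pos h]
  exact h.choose_spec

lemma lamOf_mem (w : Wd) : lamOf 2 15 w ∈ Lam 2 15 := (lamOf_spec w).1.1

/-- a suffix of `v` which is a proper prefix of a minimal square is a suffix of `Λ(v)` -/
lemma suffix_core {v k s s' : Wd} (hk : k <:+ v) (hl : k.length = (lamOf 2 15 v).length)
    (hs : MinSq 2 15 s) (hp : s' <+: s) (hne : s' ≠ s) (hsuf : s' <:+ v) : s' <:+ k := by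
  obtain ⟨t, ht, σ, rfl⟩ := exists_lam hs hp hne
  have := (lamOf_spec v).2 t ⟨ht, σ, hsuf⟩
  exact List.suffix_of_suffix_length_le hsuf hk (by simpa [hl] using this)

lemma hasSq_core {v k x : Wd} (hk : k <:+ v) (hl : k.length = (lamOf 2 15 v).length)
    (hv : ¬ HasSq 2 15 v) : HasSq 2 15 (v ++ x) ↔ HasSq 2 15 (k ++ x) := by
  constructor
  · intro h
    obtain ⟨s, hs, hsx⟩ := exists_minSq h
    obtain ⟨p, r, hpr⟩ := hsx
    rw [List.append_assoc] at hpr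
    rcases List.append_eq_append_iff.mp hpr with ⟨a', h1, h2⟩ | ⟨c', h1, h2⟩
    · skip
      rcases List.append_eq_append_iff.mp h2 with ⟨b', h3, h4⟩ | ⟨b', h3, h4⟩
      · skip
        exfalso
        apply hv
        refine hasSq_mono (isSq_hasSq hs.1) ⟨p, b', ?_⟩
        rw [h1, h3, List.append_assoc]
      · skip
        by_cases hne : a' = s
        · exfalso
          apply hv
          refine hasSq_mono (isSq_hasSq hs.1) ⟨p, [], ?_⟩
          rw [h1, hne, List.append_nil]
        · obtain ⟨k', hk'⟩ := suffix_core hk hl hs ⟨b', h3.symm⟩ hne ⟨p, h1.symm⟩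
          refine hasSq_mono (isSq_hasSq hs.1) ⟨k', r, ?_⟩
          rw [← hk', h3, h4]
          simp
    · refine hasSq_mono (isSq_hasSq hs.1) ⟨k ++ c', r, ?_⟩
      rw [h2]
      simp
  · intro h
    refine hasSq_mono h ?_
    obtain ⟨y, rfl⟩ := hk
    exact ⟨y, [], by simp⟩

lemma lamOf_core {v k x : Wd} (hk : k <:+ v) (hl : k.length = (lamOf 2 15 v).length) :
    lamOf 2 15 (v ++ x) = lamOf 2 15 (k ++ x) := by
  apply lamOf_congr
  intro t
  constructor
  · rintro ⟨ht, σ, p, hp⟩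
    refine ⟨ht, σ, ?_⟩
    obtain ⟨-, s, hs, hts, hne⟩ := ht
    rcases List.append_eq_append_iff.mp hp with ⟨a', h1, h2⟩ | ⟨c', h1, h2⟩
    · have hs' := minSq_map σ hs
      have hpre : a' <+: s.map σ := List.IsPrefix.trans ⟨x, h2.symm⟩ (hts.map σ)
      have hlt : t.length < s.length := by
        rcases lt_or_eq_of_le hts.length_le with h | h
        · exact h
        · exact absurd (hts.eq_of_length h) hne
      have hne' : a' ≠ s.map σ := by
        intro h
        have e1 := congrArg List.length h
        have e2 := congrArg List.length h2
        simp at e1 e2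
        omega
      obtain ⟨k', hk'⟩ := suffix_core hk hl hs' hpre hne' ⟨p, h1.symm⟩
      refine ⟨k', ?_⟩
      rw [h2, ← hk', List.append_assoc]
    · refine ⟨k ++ c', ?_⟩
      rw [h2]
      simp
  · rintro ⟨ht, σ, h⟩
    refine ⟨ht, σ, h.trans ?_⟩
    obtain ⟨y, rfl⟩ := hk
    exact ⟨y, by simp⟩

/-- The local condition, transported to arbitrary words. -/
lemma local_sum {C : Wd → ℝ}
    (hmin : ∀ v ∈ Lam 2 15, ∀ a : Fin 4,
      (12914 / 6541 : ℝ) * C v ≤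
        ∑ b : Fin 4,
          if ¬ HasSq 2 15 (v ++ [a, b]) then C (lamOf 2 15 (v ++ [a, b])) else 0)
    {v : Wd} (hv : ¬ HasSq 2 15 v) (a : Fin 4) :
    (12914 / 6541 : ℝ) * C (lamOf 2 15 v) ≤
      ∑ b : Fin 4, if ¬ HasSq 2 15 (v ++ [a, b]) then C (lamOf 2 15 (v ++ [a, b])) else 0 := by
  obtain ⟨⟨hm, π, hπ⟩, -⟩ := lamOf_spec v
  refine (hmin _ hm (π.symm a)).trans (le_of_eq ?_)
  apply Fintype.sum_equiv π
  intro b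
  have e : ((lamOf 2 15 v).map π) ++ [a, π b] = (lamOf 2 15 v ++ [π.symm a, b]).map π := by simp
  rw [hasSq_core hπ (by simp) hv, lamOf_core (x := [a, π b]) hπ (by simp), e, hasSq_map_iff, lamOf_map]

/-- If some letter always completes a short square then the weight vanishes. -/
lemma weight_zero {C : Wd → ℝ}
    (hnn : ∀ v ∈ Lam 2 15, 0 ≤ C v)
    (hmin : ∀ v ∈ Lam 2 15, ∀ a : Fin 4,
      (12914 / 6541 : ℝ) * C v ≤
        ∑ b : Fin 4,
          if ¬ HasSq 2 15 (v ++ [a, b]) then C (lamOf 2 15 (v ++ [a, b])) else 0)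
    {v : Wd} (hv : ¬ HasSq 2 15 v) (a : Fin 4) (h : HasSq 2 15 (v ++ [a])) :
    C (lamOf 2 15 v) = 0 := by
  have h1 := local_sum hmin hv a
  have h2 : ∀ b : Fin 4, HasSq 2 15 (v ++ [a, b]) := fun b =>
    hasSq_mono h ⟨[], [b], by simp⟩
  simp only [h2, not_true_eq_false, if_false, Finset.sum_const_zero] at h1
  have := hnn _ (lamOf_mem v)
  linarith

/-- `z` ends with a word of length `2q-1` of period `q`. -/
def Per (q : ℕ) (z : Wd) : Prop :=
  2 * q ≤ z.length + 1 ∧ ∀ i, z.length + 1 ≤ i + 2 * q → i + q < z.length → z[i]? = z[i + q]?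

lemma per_of_append {y u z : Wd} {c : Fin 4} (h : z ++ [c] = y ++ (u ++ u)) : Per u.length z := by
  have hl := congrArg List.length h
  simp at hl
  refine ⟨by omega, fun i h1 h2 => ?_⟩
  have e1 : z[i]? = (z ++ [c])[i]? := (List.getElem?_append_left (by omega)).symm
  have e2 : z[i + u.length]? = (z ++ [c])[i + u.length]? :=
    (List.getElem?_append_left (by omega)).symm
  rw [e1, e2, h, List.getElem?_append_right (l₁ := y) (by omega),
    List.getElem?_append_left (l₁ := u) (by omega),
    List.getElem?_append_right (l₁ := y) (by omega),
    List.getElem?_append_right (l₁ := u) (by omega)]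
  congr 1
  omega

lemma per_of_sq {y u z : Wd} (h : z = y ++ (u ++ u)) : Per u.length z := by
  have hl := congrArg List.length h
  simp at hl
  refine ⟨by omega, fun i h1 h2 => ?_⟩
  rw [h, List.getElem?_append_right (l₁ := y) (by omega),
    List.getElem?_append_left (l₁ := u) (by omega),
    List.getElem?_append_right (l₁ := y) (by omega),
    List.getElem?_append_right (l₁ := u) (by omega)]
  congr 1
  omega

/-- Ben's moves in `z` follow `φ`. -/
def BenC (φ : Wd → Fin 4) (z : Wd) : Prop :=
  ∀ i, i % 2 = 1 → i < z.length → z[i]? = some (φ (z.take i))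

lemma playable_odd {φ : Wd → Fin 4} {C : Wd → ℝ} {v : Wd} (h : PlayableNR φ C v) :
    v.length % 2 = 1 := by
  induction h with
  | base a h => simp
  | step a h1 h2 ih => simp; omega

lemma playable_good {φ : Wd → Fin 4} {C : Wd → ℝ} {v : Wd} (h : PlayableNR φ C v) :
    GoodNR C v := by
  cases h with
  | base a h => exact h
  | step a h1 h2 => exact h2

lemma benC_step {φ : Wd → Fin 4} {v : Wd} (b : Fin 4) (hv : v.length % 2 = 1) (h : BenC φ v) :
    BenC φ (v ++ [φ v, b]) := by
  intro i h1 h2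
  simp at h2
  rcases lt_trichotomy i v.length with h3 | h3 | h3
  · rw [List.getElem?_append_left h3, List.take_append_of_le_length h3.le]
    exact h i h1 h3
  · subst h3
    simp
  · omega

lemma playable_benC {φ : Wd → Fin 4} {C : Wd → ℝ} {v : Wd} (h : PlayableNR φ C v) :
    BenC φ v := by
  induction h with
  | base a h =>
    intro i h1 h2
    simp at h2
    omega
  | step a h1 h2 ih => exact benC_step a (playable_odd h1) ih

lemma playable_take {φ : Wd → Fin 4} {C : Wd → ℝ} {v : Wd} (h : PlayableNR φ C v) :
    ∀ L, L % 2 = 1 → L ≤ v.length → PlayableNR φ C (v.take L) := by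
  induction h with
  | base a h =>
    intro L h1 h2
    simp at h2
    have : L = 1 := by omega
    subst this
    exact PlayableNR.base a h
  | @step v a h1 h2 ih =>
    intro L h3 h4
    by_cases h5 : L ≤ v.length
    · rw [List.take_append_of_le_length h5]
      exact ih L h3 h5
    · have := playable_odd h1
      simp at h4
      rw [List.take_of_length_le (by simp; omega)]
      exact PlayableNR.step a h1 h2

lemma eq_of_per {φ : Wd → Fin 4} {n q : ℕ} {z z' : Wd} (hz : BenC φ z) (hz' : BenC φ z')
    (hl : z.length = 2 * n + 1) (hl' : z'.length = 2 * n + 1) (hq : 2 ≤ q)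
    (hp : Per q z) (hp' : Per q z')
    (ht : z.take (2 * (n + 1 - q / 2) - 1) = z'.take (2 * (n + 1 - q / 2) - 1)) : z = z' := by
  have hq2 := hp.1
  have key : ∀ i, i < 2 * n + 1 → z[i]? = z'[i]? := by
    intro i
    induction i using Nat.strong_induction_on with
    | _ i ih =>
      intro hi
      by_cases h1 : i < 2 * (n + 1 - q / 2) - 1
      · rw [← List.getElem?_take_of_lt h1, ht, List.getElem?_take_of_lt h1]
      · by_cases h2 : i = 2 * (n + 1 - q / 2) - 1 ∧ q % 2 = 0
        · rw [hz i (by omega) (by omega), hz' i (by omega) (by omega), h2.1, ht]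
        · have e1 := hp.2 (i - q) (by omega) (by omega)
          have e2 := hp'.2 (i - q) (by omega) (by omega)
          rw [show i - q + q = i by omega] at e1 e2
          rw [← e1, ← e2]
          exact ih (i - q) (by omega) (by omega)
  apply List.ext_getElem?
  intro i
  by_cases h : i < 2 * n + 1
  · exact key i h
  · rw [List.getElem?_eq_none (by omega), List.getElem?_eq_none (by omega)]

/-- A non-good extension has a long periodic suffix. -/
lemma exists_per {C : Wd → ℝ}
    (hnn : ∀ v ∈ Lam 2 15, 0 ≤ C v)
    (hmin : ∀ v ∈ Lam 2 15, ∀ a : Fin 4,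
      (12914 / 6541 : ℝ) * C v ≤
        ∑ b : Fin 4,
          if ¬ HasSq 2 15 (v ++ [a, b]) then C (lamOf 2 15 (v ++ [a, b])) else 0)
    {v : Wd} {a b : Fin 4} (hv : GoodNR C v) (hz : ¬ HasSq 2 15 (v ++ [a, b]))
    (hc : C (lamOf 2 15 (v ++ [a, b])) ≠ 0) (hg : ¬ GoodNR C (v ++ [a, b])) :
    ∃ q, 16 ≤ q ∧ Per q (v ++ [a, b]) := by
  have hpos : 0 < C (lamOf 2 15 (v ++ [a, b])) := lt_of_le_of_ne (hnn _ (lamOf_mem _)) hc.symm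
  by_cases htm : EndsWithTMP (v ++ [a, b])
  · obtain ⟨t, ⟨y, hy⟩, hlen, c, u, hu, htu⟩ := htm
    have hlu := congrArg List.length htu
    simp at hlu
    have hyu : (v ++ [a, b]) ++ [c] = y ++ (u ++ u) := by rw [← hy, List.append_assoc, htu]
    refine ⟨u.length, ?_, per_of_append hyu⟩
    by_contra hlt
    apply hc
    refine weight_zero hnn hmin hz c ?_
    exact ⟨u, by omega, by omega, y, [], by rw [hyu]; simp⟩
  · have : ∃ x : Wd, 2 ≤ x.length ∧ (x ++ x) <:+: v ++ [a, b] := by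
      by_contra hcon
      push Not at hcon
      exact hg ⟨hcon, hpos, htm⟩
    obtain ⟨x, hx, p, r, hpr⟩ := this
    have hx16 : 16 ≤ x.length := by
      by_contra hlt
      exact hz ⟨x, hx, by omega, p, r, hpr⟩
    rcases List.eq_nil_or_concat r with rfl | ⟨r1, b1, rfl⟩
    · refine ⟨x.length, hx16, per_of_sq (y := p) ?_⟩
      rw [← hpr, List.append_nil]
    · exfalso
      have h1 : (p ++ (x ++ x) ++ r1) ++ [b1] = (v ++ [a]) ++ [b] := by
        simpa using hpr
      have h2 := (List.append_inj' h1 rfl).1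
      rcases List.eq_nil_or_concat r1 with rfl | ⟨r2, b2, rfl⟩
      · rcases List.eq_nil_or_concat x with rfl | ⟨x1, d, rfl⟩
        · simp at hx
        · have h3 : (p ++ ((x1 ++ [d]) ++ x1)) ++ [d] = v ++ [a] := by simpa using h2
          have h4 := (List.append_inj' h3 rfl).1
          apply hv.2.2
          refine ⟨(x1 ++ [d]) ++ x1, ⟨p, h4⟩, ?_, d, x1 ++ [d], by simp, by simp⟩
          simp at hx ⊢
          omega
      · have h3 : (p ++ (x ++ x) ++ r2) ++ [b2] = v ++ [a] := by simpa using h2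
        have h4 := (List.append_inj' h3 rfl).1
        exact hv.1 x hx ⟨p, r2, h4⟩

lemma sset_finite (φ : Wd → Fin 4) (C : Wd → ℝ) (n : ℕ) : (SsetNR φ C n).Finite :=
  (List.finite_length_eq (Fin 4) (2 * n - 1)).subset fun _ hv => hv.2

noncomputable def F (φ : Wd → Fin 4) (C : Wd → ℝ) (n : ℕ) : Finset Wd :=
  (sset_finite φ C n).toFinset

lemma mem_F {φ : Wd → Fin 4} {C : Wd → ℝ} {n : ℕ} {v : Wd} :
    v ∈ F φ C n ↔ PlayableNR φ C v ∧ v.length = 2 * n - 1 := by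
  simp [F, SsetNR]

lemma shat_eq (φ : Wd → Fin 4) (C : Wd → ℝ) (n : ℕ) :
    ShatNR φ C n = ∑ v ∈ F φ C n, C (lamOf 2 15 v) := by
  rw [ShatNR, finsum_mem_eq_finite_toFinset_sum _ (sset_finite φ C n), F]

lemma geom_aux (r : ℝ) (M : ℕ) :
    (∑ j ∈ Finset.range (2 * M), r ^ (j / 2)) * (1 - r) = 2 * (1 - r ^ M) := by
  induction M with
  | zero => simp
  | succ M ih =>
    rw [show 2 * (M + 1) = 2 * M + 1 + 1 by ring, Finset.sum_range_succ, Finset.sum_range_succ,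
      show (2 * M + 1) / 2 = M by omega, show 2 * M / 2 = M by omega, add_mul, add_mul, ih]
    ring

lemma geom_bound {r : ℝ} (h0 : 0 < r) (h1 : r < 1) (n : ℕ) :
    ∑ q ∈ Finset.Ico 16 (n + 2), r ^ (q / 2 - 1) ≤ 2 * r ^ 7 / (1 - r) := by
  rw [Finset.sum_Ico_eq_sum_range]
  have e : ∀ j ∈ Finset.range (n + 2 - 16), r ^ ((16 + j) / 2 - 1) = r ^ 7 * r ^ (j / 2) := by
    intro j _
    rw [← pow_add]
    congr 1
    omega
  rw [Finset.sum_congr rfl e, ← Finset.mul_sum]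
  have h2 : ∑ j ∈ Finset.range (n + 2 - 16), r ^ (j / 2) ≤
      ∑ j ∈ Finset.range (2 * (n + 2 - 16)), r ^ (j / 2) := by
    apply Finset.sum_le_sum_of_subset_of_nonneg
    · apply Finset.range_mono
      omega
    · intros
      positivity
  have h3 := geom_aux r (n + 2 - 16)
  have h4 : 0 < r ^ (n + 2 - 16) := by positivity
  have h6 : 0 < 1 - r := by linarith
  rw [le_div_iff₀ h6, mul_assoc, mul_comm 2 (r ^ 7)]
  apply mul_le_mul_of_nonneg_left _ (by positivity)
  calc _ ≤ (∑ j ∈ Finset.range (2 * (n + 2 - 16)), r ^ (j / 2)) * (1 - r) :=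
        mul_le_mul_of_nonneg_right h2 h6.le
    _ ≤ 2 := by rw [h3]; linarith

/-- One-step recursion. -/
lemma recursion {C : Wd → ℝ}
    (hnn : ∀ v ∈ Lam 2 15, 0 ≤ C v)
    (hub : ∀ v ∈ Lam 2 15, C v ≤ 10635)
    (hlb : ∀ v ∈ Lam 2 15, C v = 0 ∨ 4441 ≤ C v)
    (hmin : ∀ v ∈ Lam 2 15, ∀ a : Fin 4,
      (12914 / 6541 : ℝ) * C v ≤
        ∑ b : Fin 4,
          if ¬ HasSq 2 15 (v ++ [a, b]) then C (lamOf 2 15 (v ++ [a, b])) else 0)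
    (φ : Wd → Fin 4) {n : ℕ} (hn : 1 ≤ n) :
    (12914 / 6541 : ℝ) * ShatNR φ C n ≤ ShatNR φ C (n + 1) +
      ∑ q ∈ Finset.Ico 16 (n + 2), (10635 / 4441 : ℝ) * ShatNR φ C (n + 1 - q / 2) := by
  set ext : Wd × Fin 4 → Wd := fun x => x.1 ++ [φ x.1, x.2] with hext
  set g : Wd → ℝ := fun z => if ¬ HasSq 2 15 z then C (lamOf 2 15 z) else 0 with hg
  set Z : Finset Wd := (F φ C n ×ˢ (Finset.univ : Finset (Fin 4))).image ext with hZ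
  have hinj : Function.Injective ext := by
    rintro ⟨v, b⟩ ⟨v', b'⟩ h
    have h' : v ++ [φ v, b] = v' ++ [φ v', b'] := h
    obtain ⟨h1, h2⟩ := List.append_inj' h' rfl
    simp at h2
    simp [h1, h2.2]
  have hcn : ∀ z, 0 ≤ C (lamOf 2 15 z) := fun z => hnn _ (lamOf_mem z)
  have hgn : ∀ z, 0 ≤ g z := by
    intro z
    simp only [hg]
    split_ifs
    · exact le_rfl
    · exact hcn z
  have hgu : ∀ z, g z ≤ 10635 := by
    intro z
    simp only [hg]
    split_ifs
    · norm_num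
    · exact hub _ (lamOf_mem z)
  have hgc : ∀ z, g z ≤ C (lamOf 2 15 z) := by
    intro z
    simp only [hg]
    split_ifs
    · exact hcn z
    · exact le_rfl
  have hZmem : ∀ z ∈ Z, BenC φ z ∧ z.length = 2 * n + 1 ∧
      (∀ L, L % 2 = 1 → L ≤ 2 * n - 1 → PlayableNR φ C (z.take L)) ∧
      (g z ≠ 0 → z ∈ F φ C (n + 1) ∨ ∃ q ∈ Finset.Ico 16 (n + 2), Per q z) := by
    intro z hz
    simp only [hZ, Finset.mem_image, Finset.mem_product, Finset.mem_univ, and_true,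
      Prod.exists] at hz
    obtain ⟨v, b, hv, rfl⟩ := hz
    obtain ⟨hp, hl⟩ := mem_F.mp hv
    have hl2 : (ext (v, b)).length = 2 * n + 1 := by
      simp [hext, hl]
      omega
    refine ⟨benC_step b (playable_odd hp) (playable_benC hp), hl2, ?_, ?_⟩
    · intro L h1 h2
      simp only [hext]
      rw [List.take_append_of_le_length (by omega)]
      exact playable_take hp L h1 (by omega)
    · intro hne
      have hsq : ¬ HasSq 2 15 (ext (v, b)) := by
        intro h
        apply hne
        simp [hg, h]
      have hc : C (lamOf 2 15 (ext (v, b))) ≠ 0 := by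
        intro h
        apply hne
        simp [hg, h]
      by_cases hgood : GoodNR C (ext (v, b))
      · left
        exact mem_F.mpr ⟨PlayableNR.step b hp hgood, by rw [hl2]; omega⟩
      · right
        obtain ⟨q, hq, hper⟩ := exists_per hnn hmin (playable_good hp) hsq hc hgood
        have hq1 : 2 * q ≤ (ext (v, b)).length + 1 := hper.1
        refine ⟨q, Finset.mem_Ico.mpr ⟨hq, by omega⟩, hper⟩
  have step1 : (12914 / 6541 : ℝ) * ShatNR φ C n ≤ ∑ z ∈ Z, g z := by
    rw [hZ, Finset.sum_image (fun _ _ _ _ h => hinj h), Finset.sum_product, shat_eq, Finset.mul_sum]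
    apply Finset.sum_le_sum
    intro v hv
    have hgood := playable_good (mem_F.mp hv).1
    apply local_sum hmin
    rintro ⟨u, h1, h2, h3⟩
    exact hgood.1 u h1 h3
  have step2 : ∑ z ∈ Z, g z ≤ ∑ z ∈ F φ C (n + 1), g z +
      ∑ q ∈ Finset.Ico 16 (n + 2), ∑ z ∈ Z.filter (Per q), g z := by
    have hsub : ∑ z ∈ Z, g z ≤ ∑ z ∈ Z, ((if z ∈ F φ C (n + 1) then g z else 0) +
        ∑ q ∈ Finset.Ico 16 (n + 2), if Per q z then g z else 0) := by
      apply Finset.sum_le_sum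
      intro z hz
      have hs0 : 0 ≤ ∑ q ∈ Finset.Ico 16 (n + 2), if Per q z then g z else 0 :=
        Finset.sum_nonneg fun q _ => by split_ifs; exacts [hgn z, le_rfl]
      by_cases h0 : g z = 0
      · simp [h0]
      · rcases (hZmem z hz).2.2.2 h0 with h | ⟨q, hq, hper⟩
        · rw [if_pos h]
          linarith
        · have := Finset.single_le_sum
            (f := fun q => if Per q z then g z else 0)
            (fun q _ => by split_ifs; exacts [hgn z, le_rfl]) hq
          simp only [if_pos hper] at this
          have h1 : 0 ≤ if z ∈ F φ C (n + 1) then g z else 0 := by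
            split_ifs; exacts [hgn z, le_rfl]
          linarith
    refine hsub.trans ?_
    rw [Finset.sum_add_distrib, Finset.sum_comm]
    apply add_le_add
    · rw [← Finset.sum_filter]
      apply Finset.sum_le_sum_of_subset_of_nonneg
      · intro z hz
        exact (Finset.mem_filter.mp hz).2
      · intros
        exact hgn _
    · apply le_of_eq
      apply Finset.sum_congr rfl
      intro q _
      rw [Finset.sum_filter]
  have step3 : ∑ z ∈ F φ C (n + 1), g z ≤ ShatNR φ C (n + 1) := by
    rw [shat_eq]
    exact Finset.sum_le_sum fun z _ => hgc z
  have step4 : ∀ q ∈ Finset.Ico 16 (n + 2), ∑ z ∈ Z.filter (Per q), g z ≤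
      (10635 / 4441 : ℝ) * ShatNR φ C (n + 1 - q / 2) := by
    intro q hq
    rw [Finset.mem_Ico] at hq
    have hcard : (Z.filter (Per q)).card ≤ (F φ C (n + 1 - q / 2)).card := by
      apply Finset.card_le_card_of_injOn (fun z => z.take (2 * (n + 1 - q / 2) - 1))
      · intro z hz
        have hz' := Finset.mem_filter.mp (Finset.mem_coe.mp hz)
        obtain ⟨h1, h2, h3, -⟩ := hZmem z hz'.1
        apply Finset.mem_coe.mpr
        refine mem_F.mpr ⟨h3 _ (by omega) (by omega), ?_⟩
        rw [List.length_take, h2]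
        omega
      · intro z hz z' hz' h
        have hz1 := Finset.mem_filter.mp (Finset.mem_coe.mp hz)
        have hz2 := Finset.mem_filter.mp (Finset.mem_coe.mp hz')
        obtain ⟨h1, h2, -, -⟩ := hZmem z hz1.1
        obtain ⟨h1', h2', -, -⟩ := hZmem z' hz2.1
        exact eq_of_per h1 h1' h2 h2' (by omega) hz1.2 hz2.2 h
    have hc1 : ∑ z ∈ Z.filter (Per q), g z ≤ ((Z.filter (Per q)).card : ℝ) * 10635 := by
      have := Finset.sum_le_card_nsmul (Z.filter (Per q)) g 10635 fun z _ => hgu z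
      rwa [nsmul_eq_mul] at this
    have hc2 : ((F φ C (n + 1 - q / 2)).card : ℝ) * 4441 ≤ ShatNR φ C (n + 1 - q / 2) := by
      rw [shat_eq]
      have := Finset.card_nsmul_le_sum (F φ C (n + 1 - q / 2)) (fun v => C (lamOf 2 15 v)) 4441
        (fun v hv => by
          have hgood := playable_good (mem_F.mp hv).1
          rcases hlb _ (lamOf_mem v) with h | h
          · exact absurd h hgood.2.1.ne'
          · exact h)
      rwa [nsmul_eq_mul] at this
    have hc3 : ((Z.filter (Per q)).card : ℝ) ≤ ((F φ C (n + 1 - q / 2)).card : ℝ) := by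
      exact_mod_cast hcard
    linarith
  have step5 := Finset.sum_le_sum step4
  linarith

end NRaux

/-- With coefficients as in the key lemma for the nonrepetitive game over `Fin 4`
(`p = 15`, `α = 12914/6541`, `γ = 10635/4441`), for any Ben strategy `φ` and any real
`β > 1` with `α - 2γ·β^((3-p)/2)/(β-1) ≥ β`, the weights satisfy `Ŝ_{n+1} ≥ β·Ŝ_n`
for all `n ≥ 1`. -/
theorem stmt_6 (C : List (Fin 4) → ℝ)
    (hnn : ∀ v ∈ Lam 2 15, 0 ≤ C v)
    (hub : ∀ v ∈ Lam 2 15, C v ≤ 10635)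
    (hlb : ∀ v ∈ Lam 2 15, C v = 0 ∨ 4441 ≤ C v)
    (hmin : ∀ v ∈ Lam 2 15, ∀ a : Fin 4,
      (12914 / 6541 : ℝ) * C v ≤
        ∑ b : Fin 4,
          if ¬ HasSq 2 15 (v ++ [a, b]) then C (lamOf 2 15 (v ++ [a, b])) else 0)
    (φ : List (Fin 4) → Fin 4) (β : ℝ) (hβ : 1 < β)
    (hcond : (12914 / 6541 : ℝ) -
        2 * (10635 / 4441 : ℝ) * β ^ (((3 : ℤ) - 15) / 2) / (β - 1) ≥ β) :
    ∀ n : ℕ, 1 ≤ n → ShatNR φ C (n + 1) ≥ β * ShatNR φ C n := by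
  intro n
  induction n using Nat.strong_induction_on with
  | _ n ih =>
    intro hn
    have hrec := NRaux.recursion hnn hub hlb hmin φ hn
    have hβ0 : 0 < β := by linarith
    have hr0 : 0 < β⁻¹ := inv_pos.mpr hβ0
    have hr1 : β⁻¹ < 1 := inv_lt_one_of_one_lt₀ hβ
    have hchain : ∀ k, k + 1 ≤ n → ShatNR φ C (n - k) ≤ β⁻¹ ^ k * ShatNR φ C n := by
      intro k
      induction k with
      | zero => intro _; simp
      | succ k ihk =>
        intro hk
        have h1 := ihk (by omega)
        have h2 := ih (n - (k + 1)) (by omega) (by omega)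
        rw [show n - (k + 1) + 1 = n - k by omega] at h2
        have h3 : ShatNR φ C (n - (k + 1)) ≤ β⁻¹ * ShatNR φ C (n - k) := by
          rw [inv_mul_eq_div, le_div_iff₀ hβ0]
          linarith
        calc _ ≤ β⁻¹ * ShatNR φ C (n - k) := h3
          _ ≤ β⁻¹ * (β⁻¹ ^ k * ShatNR φ C n) := mul_le_mul_of_nonneg_left h1 hr0.le
          _ = _ := by ring
    have hS0 : 0 ≤ ShatNR φ C n := by
      rw [NRaux.shat_eq]
      exact Finset.sum_nonneg fun v _ => hnn _ (NRaux.lamOf_mem v)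
    have hsum : ∑ q ∈ Finset.Ico 16 (n + 2), (10635 / 4441 : ℝ) * ShatNR φ C (n + 1 - q / 2) ≤
        (10635 / 4441 : ℝ) * ((2 * β⁻¹ ^ 7 / (1 - β⁻¹)) * ShatNR φ C n) := by
      rw [← Finset.mul_sum]
      apply mul_le_mul_of_nonneg_left _ (by norm_num)
      refine le_trans ?_ (mul_le_mul_of_nonneg_right (NRaux.geom_bound hr0 hr1 n) hS0)
      rw [Finset.sum_mul]
      apply Finset.sum_le_sum
      intro q hq
      rw [Finset.mem_Ico] at hq
      have := hchain (q / 2 - 1) (by omega)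
      rwa [show n - (q / 2 - 1) = n + 1 - q / 2 by omega] at this
    have hpow : β ^ (((3 : ℤ) - 15) / 2) = β⁻¹ ^ 6 := by
      rw [show ((3 : ℤ) - 15) / 2 = -((6 : ℕ) : ℤ) by norm_num, zpow_neg, zpow_natCast, inv_pow]
    rw [hpow] at hcond
    have heq : 2 * β⁻¹ ^ 7 / (1 - β⁻¹) = 2 * β⁻¹ ^ 6 / (β - 1) := by
      have h1 : β - 1 ≠ 0 := by linarith
      have h2 : 1 - β⁻¹ ≠ 0 := by linarith
      rw [div_eq_div_iff h2 h1]
      have h3 : β⁻¹ * β = 1 := inv_mul_cancel₀ hβ0.ne'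
      linear_combination (2 * β⁻¹ ^ 6) * h3
    rw [heq] at hsum
    have hfin := mul_le_mul_of_nonneg_right hcond hS0
    have hre : (12914 / 6541 - 2 * (10635 / 4441 : ℝ) * β⁻¹ ^ 6 / (β - 1)) * ShatNR φ C n =
      12914 / 6541 * ShatNR φ C n -
        (10635 / 4441 : ℝ) * ((2 * β⁻¹ ^ 6 / (β - 1)) * ShatNR φ C n) := by ring
    rw [hre] at hfin
    linarith
end

section
/- Let α = 12914/6541 and γ = 10635/4441. Assume (C_w)_{w∈Λ} are nonnegative real numbers such that for every v ∈ Λ, C_v ≤ 10635, either C_v = 0 or C_v ≥ 4441, and α·C_v ≤ min_{a∈A} Σ_{b∈A, vab ∈ S^{≤p}_free} C_{Λ(vab)}. Fix any Ben strategy φ, and let S_n and the weights Ŝ_n be defined from φ and (C_w) as in the context. Then for all n ≥ 1, Ŝ_{n+1} ≥ (9/5)·Ŝ_n. -/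
open scoped Classical

/-! ### Elementary facts on words -/

theorem suffix_append_cases {A : Type*} {t w l : List A} (h : t <:+ w ++ l) :
    t <:+ l ∨ ∃ t', t = t' ++ l ∧ t' <:+ w := by
  obtain ⟨r, hr⟩ := h
  rcases List.append_eq_append_iff.1 hr with ⟨a, h1, h2⟩ | ⟨a, h1, h2⟩
  · exact Or.inr ⟨a, h2, ⟨r, h1.symm⟩⟩
  · exact Or.inl ⟨a, h2.symm⟩

theorem hasSq_mono {A : Type*} {lo hi : ℕ} {w w' : List A} (h : w <:+: w')
    (hw : HasSq lo hi w) : HasSq lo hi w' := by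
  obtain ⟨u, h1, h2, h3⟩ := hw
  exact ⟨u, h1, h2, h3.trans h⟩

theorem hasSq_map {A : Type*} {lo hi : ℕ} {w : List A} (π : Equiv.Perm A)
    (hw : HasSq lo hi w) : HasSq lo hi (w.map π) := by
  obtain ⟨u, h1, h2, h3⟩ := hw
  refine ⟨u.map π, by simpa using h1, by simpa using h2, ?_⟩
  rw [← List.map_append]
  exact h3.map π

theorem map_symm_map {A : Type*} (π : Equiv.Perm A) (w : List A) :
    (w.map π).map π.symm = w := by
  simp [List.map_map]

theorem map_map_symm {A : Type*} (π : Equiv.Perm A) (w : List A) :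
    (w.map π.symm).map π = w := by
  simp [List.map_map]

theorem hasSq_map_iff {A : Type*} {lo hi : ℕ} {w : List A} (π : Equiv.Perm A) :
    HasSq lo hi (w.map π) ↔ HasSq lo hi w := by
  refine ⟨fun h => ?_, hasSq_map π⟩
  have := hasSq_map π.symm h
  rwa [map_symm_map] at this

theorem isSq_map {A : Type*} {lo hi : ℕ} {w : List A} (π : Equiv.Perm A)
    (hw : IsSq lo hi w) : IsSq lo hi (w.map π) := by
  obtain ⟨u, h1, h2, h3⟩ := hw
  exact ⟨u.map π, by simpa using h1, by simpa using h2, by rw [h3, List.map_append]⟩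

theorem minSq_map {A : Type*} {lo hi : ℕ} {w : List A} (π : Equiv.Perm A)
    (hw : MinSq lo hi w) : MinSq lo hi (w.map π) := by
  refine ⟨isSq_map π hw.1, fun f hf hne hsq => ?_⟩
  refine hw.2 (f.map π.symm) ?_ ?_ (isSq_map π.symm hsq)
  · have := hf.map π.symm
    rwa [map_symm_map] at this
  · intro h
    apply hne
    rw [← h, map_map_symm]

theorem exists_minSq {A : Type*} {lo hi : ℕ} {w : List A} (h : HasSq lo hi w) :
    ∃ s, MinSq lo hi s ∧ s <:+: w := by
  obtain ⟨u, h1, h2, h3⟩ := h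
  have key : ∀ n : ℕ, ∀ s : List A, s.length = n → IsSq lo hi s → s <:+: w →
      ∃ s, MinSq lo hi s ∧ s <:+: w := by
    intro n
    induction n using Nat.strong_induction_on with
    | _ n ih =>
      intro s hs hsq hsw
      by_cases hm : MinSq lo hi s
      · exact ⟨s, hm, hsw⟩
      · have : ∃ f : List A, f <:+: s ∧ f ≠ s ∧ IsSq lo hi f := by
          by_contra hcon
          push Not at hcon
          exact hm ⟨hsq, fun f hf hne => hcon f hf hne⟩
        obtain ⟨f, hf, hne, hfs⟩ := this
        refine ih f.length ?_ f rfl hfs (hf.trans hsw)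
        rw [← hs]
        rcases lt_or_eq_of_le hf.length_le with h | h
        · exact h
        · exact absurd (hf.eq_of_length h) hne
  exact key _ _ rfl ⟨u, h1, h2, rfl⟩ h3

theorem exists_normalized (s : List (Fin 4)) :
    ∃ ρ : Equiv.Perm (Fin 4), Normalized (s.map ρ) := by
  obtain ⟨ρ, hρ⟩ := Finite.exists_min (fun π : Equiv.Perm (Fin 4) => s.map π)
  refine ⟨ρ, fun π h => ?_⟩
  have h1 := hρ (ρ.trans π)
  have h2 : (s.map ρ).map π < s.map ρ := h
  rw [List.map_map] at h2
  exact absurd h1 (not_le.2 h2)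

/-! ### The function `Λ` -/

/-- The words of `Λ` that are suffixes of `w` up to permutation. -/
def LamSuf (w v : List (Fin 4)) : Prop :=
  v ∈ Lam (A := Fin 4) 2 15 ∧ ∃ π : Equiv.Perm (Fin 4), v.map π <:+ w

/-- A longest element of a predicate on words. -/
noncomputable def pickLong (P : List (Fin 4) → Prop) : List (Fin 4) :=
  if h : ∃ v : List (Fin 4), P v ∧ ∀ v' : List (Fin 4), P v' → v'.length ≤ v.length
  then h.choose else []

theorem lamOf_eq_pickLong (w : List (Fin 4)) : lamOf 2 15 w = pickLong (LamSuf w) := rfl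

theorem lamOf_congr {w w' : List (Fin 4)} (h : ∀ v, LamSuf w v ↔ LamSuf w' v) :
    lamOf 2 15 w = lamOf 2 15 w' := by
  rw [lamOf_eq_pickLong, lamOf_eq_pickLong, show LamSuf w = LamSuf w' from
    funext fun v => propext (h v)]

theorem lamSuf_map {w v : List (Fin 4)} (π : Equiv.Perm (Fin 4)) (h : LamSuf w v) :
    LamSuf (w.map π) v := by
  obtain ⟨h1, ρ, h2⟩ := h
  refine ⟨h1, ρ.trans π, ?_⟩
  have := h2.map π
  rwa [List.map_map] at this

theorem lamOf_map (w : List (Fin 4)) (π : Equiv.Perm (Fin 4)) :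
    lamOf 2 15 (w.map π) = lamOf 2 15 w := by
  refine lamOf_congr fun v => ⟨fun h => ?_, lamSuf_map π⟩
  have := lamSuf_map π.symm h
  rwa [map_symm_map] at this

theorem minSq_length {s : List (Fin 4)} (h : MinSq 2 15 s) : 4 ≤ s.length := by
  obtain ⟨⟨u, h1, _, h3⟩, _⟩ := h
  rw [h3, List.length_append]
  omega

theorem nil_mem_Lam : ([] : List (Fin 4)) ∈ Lam (A := Fin 4) 2 15 := by
  refine ⟨fun π h => by simp at h, ?_⟩
  have h : HasSq 2 15 ([0, 1, 0, 1] : List (Fin 4)) :=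
    ⟨[0, 1], by simp, by simp, by simp⟩
  obtain ⟨s, hs, -⟩ := exists_minSq h
  refine ⟨s, hs, List.nil_prefix, fun h0 => ?_⟩
  have := minSq_length hs
  rw [← h0] at this
  simp at this

theorem lamOf_spec (w : List (Fin 4)) :
    LamSuf w (lamOf 2 15 w) ∧ ∀ v, LamSuf w v → v.length ≤ (lamOf 2 15 w).length := by
  have hex : ∃ v, LamSuf w v ∧ ∀ v', LamSuf w v' → v'.length ≤ v.length := by
    have hne : ∃ n, ∃ v, LamSuf w v ∧ v.length = n :=
      ⟨0, [], ⟨nil_mem_Lam, Equiv.refl _, by simp⟩, rfl⟩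
    have hb : ∀ v, LamSuf w v → v.length ≤ w.length := by
      rintro v ⟨-, π, h⟩
      simpa using h.length_le
    obtain ⟨v, hv, hl⟩ := Nat.findGreatest_spec (P := fun n => ∃ v, LamSuf w v ∧ v.length = n)
      (n := w.length) (m := 0) (Nat.zero_le _)
      ⟨[], ⟨nil_mem_Lam, Equiv.refl _, by simp⟩, rfl⟩
    refine ⟨v, hv, fun v' hv' => ?_⟩
    rw [hl]
    exact Nat.le_findGreatest (hb v' hv') ⟨v', hv', rfl⟩
  rw [lamOf_eq_pickLong]
  unfold pickLong
  rw [dif_pos hex]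
  exact hex.choose_spec

theorem lamOf_mem (w : List (Fin 4)) : lamOf 2 15 w ∈ Lam (A := Fin 4) 2 15 :=
  (lamOf_spec w).1.1

theorem suffix_lam {w s s' : List (Fin 4)} {π : Equiv.Perm (Fin 4)} (hs : MinSq 2 15 s)
    (hp : s' <+: s) (hne : s' ≠ s) (hw : s' <:+ w)
    (hπ : (lamOf 2 15 w).map π <:+ w) : s' <:+ (lamOf 2 15 w).map π := by
  refine List.suffix_of_suffix_length_le hw hπ ?_
  obtain ⟨ρ, hρ⟩ := exists_normalized s'
  have h : LamSuf w (s'.map ρ) := by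
    refine ⟨⟨hρ, s.map ρ, minSq_map ρ hs, hp.map ρ, ?_⟩, ρ.symm, ?_⟩
    · intro h
      exact hne (List.map_injective_iff.2 ρ.injective h)
    · rwa [map_symm_map]
  have := (lamOf_spec w).2 _ h
  simpa using this

theorem hasSq_transfer {w : List (Fin 4)} {π : Equiv.Perm (Fin 4)} (hfree : ¬ HasSq 2 15 w)
    (hπ : (lamOf 2 15 w).map π <:+ w) (c b : Fin 4) :
    HasSq 2 15 ((lamOf 2 15 w).map π ++ [c, b]) ↔ HasSq 2 15 (w ++ [c, b]) := by
  constructor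
  · refine hasSq_mono ?_
    obtain ⟨r, hr⟩ := hπ
    exact List.IsSuffix.isInfix ⟨r, by rw [← List.append_assoc, hr]⟩
  · intro h
    obtain ⟨s, hs, hsw⟩ := exists_minSq h
    have hlen := minSq_length hs
    have hns : ¬ s <:+: w := by
      obtain ⟨⟨u, h1, h2, h3⟩, -⟩ := hs
      intro hi
      exact hfree ⟨u, h1, h2, h3 ▸ hi⟩
    have hsq : ∀ {w'}, s <:+: w' → HasSq 2 15 w' := by
      obtain ⟨⟨u, h1, h2, h3⟩, -⟩ := hs
      intro w' hi
      exact ⟨u, h1, h2, h3 ▸ hi⟩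
    have step : ∀ l : List (Fin 4), l ≠ [] → l.length ≤ 2 → s <:+ w ++ l →
        s <:+ (lamOf 2 15 w).map π ++ l := by
      intro l hl hl2 hsl
      rcases suffix_append_cases hsl with h | ⟨t, rfl, ht⟩
      · have := h.length_le
        omega
      · obtain ⟨r, hr⟩ := suffix_lam hs (List.prefix_append t l)
          (fun h => hl (by simpa using h)) ht hπ
        exact ⟨r, by rw [← List.append_assoc, hr]⟩
    have e : w ++ [c, b] = (w ++ [c]) ++ [b] := by simp
    have e' : (lamOf 2 15 w).map π ++ [c, b] = ((lamOf 2 15 w).map π ++ [c]) ++ [b] := by simp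
    rw [e, List.infix_concat_iff] at hsw
    rcases hsw with h | h
    · rw [← e] at h
      exact hsq (step [c, b] (by simp) (by simp) h).isInfix
    · rw [List.infix_concat_iff] at h
      rcases h with h | h
      · rw [e']
        exact hasSq_mono (List.prefix_append _ _).isInfix
          (hsq (step [c] (by simp) (by simp) h).isInfix)
      · exact absurd h hns

theorem lamOf_transfer {w : List (Fin 4)} {π : Equiv.Perm (Fin 4)}
    (hπ : (lamOf 2 15 w).map π <:+ w) (c b : Fin 4) :
    lamOf 2 15 ((lamOf 2 15 w).map π ++ [c, b]) = lamOf 2 15 (w ++ [c, b]) := by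
  refine lamOf_congr fun v => ?_
  constructor
  · rintro ⟨h1, ρ, h2⟩
    refine ⟨h1, ρ, h2.trans ?_⟩
    obtain ⟨r, hr⟩ := hπ
    exact ⟨r, by rw [← List.append_assoc, hr]⟩
  · rintro ⟨h1, ρ, h2⟩
    refine ⟨h1, ρ, ?_⟩
    rcases suffix_append_cases h2 with h | ⟨t, ht, htw⟩
    · exact h.trans (List.suffix_append _ _)
    · obtain ⟨-, s, hs, hp, hne⟩ := h1
      have hp' : t ++ [c, b] <+: s.map ρ := ht ▸ hp.map ρ
      have hne' : t ≠ s.map ρ := by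
        intro h
        have := hp'.length_le
        rw [← h, List.length_append] at this
        simp at this
      obtain ⟨r, hr⟩ := suffix_lam (minSq_map ρ hs) ((List.prefix_append _ _).trans hp') hne'
        htw hπ
      rw [ht]
      exact ⟨r, by rw [← List.append_assoc, hr]⟩

/-- The growth hypothesis transferred from `Λ(w)` to `w`. -/
theorem growth_word (C : List (Fin 4) → ℝ)
    (hmin : ∀ v ∈ Lam 2 15, ∀ a : Fin 4,
      (12914 / 6541 : ℝ) * C v ≤
        ∑ b : Fin 4,
          if ¬ HasSq 2 15 (v ++ [a, b]) then C (lamOf 2 15 (v ++ [a, b])) else 0)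
    {w : List (Fin 4)} (hfree : ¬ HasSq 2 15 w) (c : Fin 4) :
    (12914 / 6541 : ℝ) * C (lamOf 2 15 w) ≤
        ∑ b : Fin 4,
          if HasSq 2 15 (w ++ [c, b]) then 0 else C (lamOf 2 15 (w ++ [c, b])) := by
  obtain ⟨π, hπ⟩ := (lamOf_spec w).1.2
  refine (hmin _ (lamOf_mem w) (π.symm c)).trans (le_of_eq ?_)
  refine Fintype.sum_equiv π _ _ fun b => ?_
  have e : ((lamOf 2 15 w) ++ [π.symm c, b]).map π = (lamOf 2 15 w).map π ++ [c, π b] := by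
    simp
  have e1 : HasSq 2 15 (lamOf 2 15 w ++ [π.symm c, b]) ↔ HasSq 2 15 (w ++ [c, π b]) := by
    rw [← hasSq_map_iff π, e, hasSq_transfer hfree hπ]
  have e2 : lamOf 2 15 (lamOf 2 15 w ++ [π.symm c, b]) = lamOf 2 15 (w ++ [c, π b]) := by
    rw [← lamOf_map _ π, e, lamOf_transfer hπ]
  by_cases h : HasSq 2 15 (w ++ [c, π b])
  · rw [if_neg (not_not.2 (e1.2 h)), if_pos h]
  · rw [if_pos (fun h' => h (e1.1 h')), if_neg h, e2]

/-! ### Bad words end with a long `2⁻`-power -/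

/-- `x` ends with a `2⁻`-power of period `q`. -/
def EndsPer (q : ℕ) (x : List (Fin 4)) : Prop :=
  ∃ (w z : List (Fin 4)) (a : Fin 4), w <:+ x ∧ w ++ [a] = z ++ z ∧ z.length = q

theorem bad_long (C : List (Fin 4) → ℝ)
    (hmin : ∀ v ∈ Lam 2 15, ∀ a : Fin 4,
      (12914 / 6541 : ℝ) * C v ≤
        ∑ b : Fin 4,
          if ¬ HasSq 2 15 (v ++ [a, b]) then C (lamOf 2 15 (v ++ [a, b])) else 0)
    {v : List (Fin 4)} (hv : GoodNR C v) (c b : Fin 4)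
    (hfree : ¬ HasSq 2 15 (v ++ [c, b])) (hpos : 0 < C (lamOf 2 15 (v ++ [c, b])))
    (hbad : ¬ GoodNR C (v ++ [c, b])) : ∃ q, 16 ≤ q ∧ EndsPer q (v ++ [c, b]) := by
  by_cases hsq : ∃ z : List (Fin 4), 2 ≤ z.length ∧ (z ++ z) <:+: v ++ [c, b]
  · obtain ⟨z, hz2, hz⟩ := hsq
    have hz16 : 16 ≤ z.length := by
      by_contra hlt
      exact hfree ⟨z, hz2, by omega, hz⟩
    have e : v ++ [c, b] = (v ++ [c]) ++ [b] := by simp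
    have hz' := hz
    rw [e, List.infix_concat_iff] at hz'
    rcases hz' with h | h
    · rw [← e] at h
      obtain ⟨a, z', rfl⟩ : ∃ a z', z = a :: z' := by
        cases z with
        | nil => simp at hz2
        | cons a z' => exact ⟨a, z', rfl⟩
      refine ⟨_, hz16, z' ++ a :: z', z' ++ [a], a, ?_, by simp, by simp⟩
      exact (List.suffix_cons a _).trans h
    · exfalso
      rw [List.infix_concat_iff] at h
      rcases h with h | h
      · rcases suffix_append_cases h with h | ⟨t, ht, htv⟩
        · have := h.length_le
          simp at this
          omega
        · refine hv.2.2 ⟨t, htv, ?_, c, z, ?_, ht.symm⟩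
          · have := congrArg List.length ht
            simp at this
            omega
          · rintro rfl
            simp at hz2
      · exact hv.1 z hz2 h
  · have htmp : EndsWithTMP (v ++ [c, b]) := by
      by_contra hcon
      exact hbad ⟨fun z h2 hz => hsq ⟨z, h2, hz⟩, hpos, hcon⟩
    obtain ⟨w, hw, hw3, a, z, hz0, hwz⟩ := htmp
    refine ⟨z.length, ?_, w, z, a, hw, hwz, rfl⟩
    by_contra hlt
    have hl := congrArg List.length hwz
    simp at hl
    have hg := growth_word C hmin hfree a
    have hz : ∀ d : Fin 4, HasSq 2 15 (v ++ [c, b] ++ [a, d]) := by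
      intro d
      refine ⟨z, by omega, by omega, ?_⟩
      rw [← hwz]
      obtain ⟨r, hr⟩ := hw
      exact ⟨r, [d], by rw [← hr]; simp⟩
    rw [Finset.sum_eq_zero (fun d _ => if_pos (hz d))] at hg
    nlinarith

/-! ### Playable words -/

theorem playable_good {φ : List (Fin 4) → Fin 4} {C : List (Fin 4) → ℝ} {v : List (Fin 4)}
    (h : PlayableNR φ C v) : GoodNR C v := by
  cases h <;> assumption

theorem playable_odd {φ : List (Fin 4) → Fin 4} {C : List (Fin 4) → ℝ} {v : List (Fin 4)}
    (h : PlayableNR φ C v) : v.length % 2 = 1 := by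
  induction h with
  | base a h => simp
  | step a h h' ih => simp; omega

/-- Odd prefixes of words obtained by Ann from a playable word are playable, and are followed
by the letter given by the strategy. -/
theorem playable_prefix {φ : List (Fin 4) → Fin 4} {C : List (Fin 4) → ℝ} {v : List (Fin 4)}
    (h : PlayableNR φ C v) : ∀ (b : Fin 4) (k : ℕ), 2 * k + 1 ≤ v.length →
      PlayableNR φ C ((v ++ [φ v, b]).take (2 * k + 1)) ∧
      (v ++ [φ v, b])[2 * k + 1]? = some (φ ((v ++ [φ v, b]).take (2 * k + 1))) := by
  induction h with
  | base a h =>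
    intro b k hk
    have : k = 0 := by simp at hk; omega
    subst this
    exact ⟨by simpa using PlayableNR.base a h, by simp⟩
  | @step v a h h' ih =>
    intro b k hk
    set x := v ++ [φ v, a] with hx
    have ho := playable_odd h
    have hxl : x.length = v.length + 2 := by simp [hx]
    by_cases hk' : 2 * k + 1 ≤ v.length
    · have := ih a k hk'
      rw [← hx] at this
      rw [List.take_append_of_le_length hk, List.getElem?_append_left (by omega)]
      exact this
    · have hkx : 2 * k + 1 = x.length := by omega
      rw [hkx]
      rw [List.take_left, List.getElem?_append_right le_rfl]
      exact ⟨PlayableNR.step a h h', by simp⟩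

theorem endsPer_get {q : ℕ} {x : List (Fin 4)} (h : EndsPer q x) (hq : 0 < q) :
    2 * q - 1 ≤ x.length ∧
    ∀ i, x.length + 1 ≤ i + q → i < x.length → x[i]? = x[i - q]? := by
  obtain ⟨w, z, a, ⟨y, rfl⟩, hwz, rfl⟩ := h
  have hl := congrArg List.length hwz
  simp only [List.length_append, List.length_singleton] at hl
  simp only [List.length_append]
  refine ⟨by omega, fun i h1 h2 => ?_⟩
  have e : ∀ j, j < y.length + w.length → (y ++ w)[j]? = (y ++ (z ++ z))[j]? := by
    intro j hj
    rw [← hwz, ← List.append_assoc y w [a],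
      List.getElem?_append_left (l₁ := y ++ w) (by simpa using hj)]
  rw [e i h2, e (i - z.length) (by omega), List.getElem?_append_right (by omega),
    List.getElem?_append_right (by omega), List.getElem?_append_right (by omega),
    List.getElem?_append_left (by omega)]
  congr 1
  omega

theorem eq_of_per {q n : ℕ} {x x' : List (Fin 4)} (hx : x.length = n) (hx' : x'.length = n)
    (hq : 0 < q) (h : EndsPer q x) (h' : EndsPer q x')
    (hpre : ∀ i, i + q < n + 1 → x[i]? = x'[i]?) : x = x' := by
  have hlen := (endsPer_get h hq).1
  apply List.ext_getElem?
  intro i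
  induction i using Nat.strong_induction_on with
  | _ i ih =>
    by_cases h1 : i + q < n + 1
    · exact hpre i h1
    · by_cases h2 : i < n
      · rw [(endsPer_get h hq).2 i (by omega) (by omega),
          (endsPer_get h' hq).2 i (by omega) (by omega)]
        exact ih _ (by omega)
      · rw [List.getElem?_eq_none (by omega), List.getElem?_eq_none (by omega)]

/-! ### Finite sets of playable words -/

theorem Sset_finite (φ : List (Fin 4) → Fin 4) (C : List (Fin 4) → ℝ) (n : ℕ) :
    (SsetNR φ C n).Finite :=
  (List.finite_length_eq (Fin 4) (2 * n - 1)).subset fun _ hv => hv.2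

/-- `S_n` as a finite set. -/
noncomputable def Sfin (φ : List (Fin 4) → Fin 4) (C : List (Fin 4) → ℝ) (n : ℕ) :
    Finset (List (Fin 4)) := (Sset_finite φ C n).toFinset

theorem mem_Sfin {φ : List (Fin 4) → Fin 4} {C : List (Fin 4) → ℝ} {n : ℕ}
    {v : List (Fin 4)} : v ∈ Sfin φ C n ↔ PlayableNR φ C v ∧ v.length = 2 * n - 1 := by
  simp [Sfin, SsetNR]

theorem Shat_eq (φ : List (Fin 4) → Fin 4) (C : List (Fin 4) → ℝ) (n : ℕ) :
    ShatNR φ C n = ∑ v ∈ Sfin φ C n, C (lamOf 2 15 v) := by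
  unfold ShatNR Sfin
  rw [finsum_mem_eq_finite_toFinset_sum]

/-- Weight of the playable one-round extensions of `v`. -/
noncomputable def gsum (φ : List (Fin 4) → Fin 4) (C : List (Fin 4) → ℝ)
    (v : List (Fin 4)) : ℝ :=
  ∑ b : Fin 4, if GoodNR C (v ++ [φ v, b]) then C (lamOf 2 15 (v ++ [φ v, b])) else 0

/-- Bad answers of Ann after `v`. -/
noncomputable def badset (φ : List (Fin 4) → Fin 4) (C : List (Fin 4) → ℝ)
    (v : List (Fin 4)) : Finset (Fin 4) :=
  Finset.univ.filter fun b => ¬ HasSq 2 15 (v ++ [φ v, b]) ∧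
    0 < C (lamOf 2 15 (v ++ [φ v, b])) ∧ ¬ GoodNR C (v ++ [φ v, b])

/-- Total number of bad words at level `n`. -/
noncomputable def Bad (φ : List (Fin 4) → Fin 4) (C : List (Fin 4) → ℝ) (n : ℕ) : ℕ :=
  ∑ v ∈ Sfin φ C n, (badset φ C v).card

theorem Shat_succ (φ : List (Fin 4) → Fin 4) (C : List (Fin 4) → ℝ) (n : ℕ) (hn : 1 ≤ n) :
    ShatNR φ C (n + 1) = ∑ v ∈ Sfin φ C n, gsum φ C v := by
  rw [Shat_eq]
  unfold gsum
  rw [← Finset.sum_product' (Sfin φ C n) Finset.univ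
    (fun v b => if GoodNR C (v ++ [φ v, b]) then C (lamOf 2 15 (v ++ [φ v, b])) else 0),
    ← Finset.sum_filter]
  symm
  refine Finset.sum_bij (fun p _ => p.1 ++ [φ p.1, p.2]) ?_ ?_ ?_ ?_
  · rintro ⟨v, b⟩ h
    simp only [Finset.mem_filter, Finset.mem_product, mem_Sfin] at h
    rw [mem_Sfin]
    refine ⟨PlayableNR.step b h.1.1.1 h.2, ?_⟩
    simp [h.1.1.2]
    omega
  · rintro ⟨v, b⟩ h ⟨v', b'⟩ h' e
    have := List.append_inj' e (by simp)
    simp only [List.cons.injEq] at this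
    simp [this.1, this.2.2.1]
  · intro x hx
    rw [mem_Sfin] at hx
    obtain ⟨hp, hl⟩ := hx
    cases hp with
    | base a h => simp at hl; omega
    | @step v a h h' =>
      refine ⟨(v, a), ?_, rfl⟩
      simp only [Finset.mem_filter, Finset.mem_product, mem_Sfin, Finset.mem_univ, and_true]
      refine ⟨⟨h, ?_⟩, h'⟩
      simp at hl
      omega
  · intros
    rfl

theorem good_free {C : List (Fin 4) → ℝ} {v : List (Fin 4)} (h : GoodNR C v) :
    ¬ HasSq 2 15 v := by
  rintro ⟨u, h1, -, h3⟩
  exact h.1 u h1 h3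

theorem bad_le (C : List (Fin 4) → ℝ)
    (hmin : ∀ v ∈ Lam 2 15, ∀ a : Fin 4,
      (12914 / 6541 : ℝ) * C v ≤
        ∑ b : Fin 4,
          if ¬ HasSq 2 15 (v ++ [a, b]) then C (lamOf 2 15 (v ++ [a, b])) else 0)
    (φ : List (Fin 4) → Fin 4) (n : ℕ) :
    Bad φ C n ≤ 2 * ∑ m ∈ Finset.Icc 1 (n - 7), (Sfin φ C m).card := by
  -- data attached to a bad word
  have key : ∀ p : List (Fin 4) × Fin 4, p.1 ∈ Sfin φ C n → p.2 ∈ badset φ C p.1 →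
      ∃ t : Bool × ℕ, EndsPer (2 * t.2 + t.1.toNat) (p.1 ++ [φ p.1, p.2]) ∧ 8 ≤ t.2 ∧
        2 * t.2 ≤ n + 1 ∧ 1 ≤ n := by
    rintro ⟨v, b⟩ hv hb
    simp only [mem_Sfin] at hv
    simp only [badset, Finset.mem_filter] at hb
    obtain ⟨q, hq, hper⟩ := bad_long C hmin (playable_good hv.1) (φ v) b hb.2.1 hb.2.2.1 hb.2.2.2
    have hl := (endsPer_get hper (by omega)).1
    have ho := playable_odd hv.1
    simp [hv.2] at hl
    rw [hv.2] at ho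
    rcases Nat.even_or_odd' q with ⟨j, rfl | rfl⟩
    · exact ⟨(false, j), by simpa using hper, by simp; omega, by simp; omega, by omega⟩
    · exact ⟨(true, j), by simpa using hper, by simp; omega, by simp; omega, by omega⟩
  choose! T hT using key
  have hcard : Bad φ C n = ((Sfin φ C n).sigma fun v => badset φ C v).card := by
    rw [Finset.card_sigma, Bad]
  have hcard2 : 2 * ∑ m ∈ Finset.Icc 1 (n - 7), (Sfin φ C m).card =
      ((Finset.univ : Finset Bool) ×ˢ
        ((Finset.Icc 1 (n - 7)).sigma fun m => Sfin φ C m)).card := by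
    rw [Finset.card_product, Finset.card_sigma]
    simp
  rw [hcard, hcard2]
  refine Finset.card_le_card_of_injOn
    (fun p => ((T (p.1, p.2)).1, ⟨n + 1 - (T (p.1, p.2)).2,
      (p.1 ++ [φ p.1, p.2]).take (2 * (n - (T (p.1, p.2)).2) + 1)⟩)) ?_ ?_
  · rintro ⟨v, b⟩ h
    simp only [Finset.coe_sigma, Set.mem_sigma_iff, Finset.mem_coe] at h
    have ht := hT (v, b) h.1 h.2
    simp only at ht
    have hv := mem_Sfin.1 h.1
    simp only [Finset.mem_coe, Finset.mem_product, Finset.mem_univ, true_and,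
      Finset.mem_sigma, Finset.mem_Icc]
    refine ⟨by omega, mem_Sfin.2 ⟨(playable_prefix hv.1 b _ (by omega)).1, ?_⟩⟩
    simp [hv.2]
    omega
  · rintro ⟨v, b⟩ h ⟨v', b'⟩ h' e
    simp only [Finset.coe_sigma, Set.mem_sigma_iff, Finset.mem_coe] at h h'
    have ht := hT (v, b) h.1 h.2
    have ht' := hT (v', b') h'.1 h'.2
    have hv := mem_Sfin.1 h.1
    have hv' := mem_Sfin.1 h'.1
    simp only [Prod.mk.injEq, Sigma.mk.injEq, heq_eq_eq] at e
    simp only at ht ht'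
    obtain ⟨e1, e2, e3⟩ := e
    have e4 : (T (v', b')).2 = (T (v, b)).2 := by omega
    rw [← e1, e4] at ht'
    rw [e4] at e3
    generalize (T (v, b)).2 = j at *
    generalize (T (v, b)).1 = s at *
    have hx : (v ++ [φ v, b]).length = 2 * n + 1 := by simp [hv.2]; omega
    have hx' : (v' ++ [φ v', b']).length = 2 * n + 1 := by simp [hv'.2]; omega
    have hs : s.toNat ≤ 1 := by cases s <;> simp
    have hxx : v ++ [φ v, b] = v' ++ [φ v', b'] := by
      refine eq_of_per hx hx' (by omega) ht.1 ht'.1 fun i hi => ?_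
      rcases Nat.lt_or_ge i (2 * (n - j) + 1) with h1 | h1
      · have := congrArg (fun l => l[i]?) e3
        simp only [List.getElem?_take, if_pos h1] at this
        exact this
      · have h2 : i = 2 * (n - j) + 1 := by omega
        rw [h2, (playable_prefix hv.1 b (n - j) (by omega)).2,
          (playable_prefix hv'.1 b' (n - j) (by omega)).2, e3]
    have := List.append_inj' hxx (by simp)
    simp only [List.cons.injEq] at this
    obtain ⟨rfl, -, rfl, -⟩ := this
    rfl

/-! ### The numerical induction -/

theorem numeric (s : ℕ → ℝ) (k : ℕ → ℕ) (B : ℕ → ℕ) (hk : ∀ n, 4441 * (k n : ℝ) ≤ s n)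
    (h1 : ∀ n, 1 ≤ n → (12914 / 6541 : ℝ) * s n - 10635 * B n ≤ s (n + 1))
    (h2 : ∀ n, 1 ≤ n → (12914 / 6541 : ℝ) * 4441 * (k n - B n) ≤ s (n + 1))
    (h3 : ∀ n, B n ≤ 2 * ∑ m ∈ Finset.Icc 1 (n - 7), k m) :
    ∀ n, 1 ≤ n → (9 / 5 : ℝ) * s n ≤ s (n + 1) := by
  have h3' : ∀ n, (B n : ℝ) ≤ 2 * ∑ m ∈ Finset.Icc 1 (n - 7), (k m : ℝ) := by
    intro n
    exact_mod_cast h3 n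
  have hs0 : ∀ n, 0 ≤ s n := fun n => le_trans (by positivity) (hk n)
  intro n
  induction n using Nat.strong_induction_on with
  | _ n ih =>
    intro hn
    have hT : ∀ m, m ≤ n → ∑ i ∈ Finset.Icc 1 m, s i ≤ 9 / 4 * s m := by
      intro m
      induction m with
      | zero => intro _; simpa using hs0 0
      | succ m ihm =>
        intro hm
        rw [Finset.sum_Icc_succ_top (by omega)]
        rcases Nat.eq_zero_or_pos m with rfl | hm0
        · simp
          linarith [hs0 1]
        · have := ihm (by omega)
          have := ih m (by omega) hm0
          linarith
    have hpow : ∀ d m, 1 ≤ m → m + d ≤ n → (9 / 5 : ℝ) ^ d * s m ≤ s (m + d) := by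
      intro d
      induction d with
      | zero => intro m _ _; simp
      | succ d ihd =>
        intro m hm hmd
        have a := ihd m hm (by omega)
        have b := ih (m + d) (by omega) (by omega)
        rw [pow_succ]
        rw [← add_assoc]
        nlinarith
    have hc : ∀ m, 1 ≤ m → m < n → 4441 * (k m : ℝ) ≤ 137 / 250 * s (m + 1) := by
      intro m hm hmn
      have hB : 4441 * (B m : ℝ) ≤ 41 / 1000 * s (m + 1) := by
        have hb := h3' m
        have hb2 : 4441 * ∑ i ∈ Finset.Icc 1 (m - 7), (k i : ℝ) ≤
            ∑ i ∈ Finset.Icc 1 (m - 7), s i := by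
          rw [Finset.mul_sum]
          exact Finset.sum_le_sum fun i _ => hk i
        rcases Nat.lt_or_ge m 8 with h | h
        · rw [show m - 7 = 0 by omega] at hb
          simp at hb
          rw [hb]
          simp
          exact hs0 _
        · have := hT (m - 7) (by omega)
          have hp := hpow 8 (m - 7) (by omega) (by omega)
          rw [show m - 7 + 8 = m + 1 by omega] at hp
          norm_num at hp
          linarith [hs0 (m - 7)]
      have := h2 m hm
      have := hs0 (m + 1)
      linarith
    have hB : 4441 * (B n : ℝ) ≤ 7255 / 100000 * s n := by
      have hb := h3' n
      rcases Nat.lt_or_ge n 8 with h | h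
      · rw [show n - 7 = 0 by omega] at hb
        simp at hb
        rw [hb]
        simp
        exact hs0 _
      · have hb2 : 4441 * ∑ i ∈ Finset.Icc 1 (n - 7), (k i : ℝ) ≤
            137 / 250 * ∑ i ∈ Finset.Icc 1 (n - 6), s i := by
          have e : ∑ i ∈ Finset.Icc 1 (n - 7), s (i + 1) ≤ ∑ i ∈ Finset.Icc 1 (n - 6), s i := by
            have e0 : ∀ N, ∑ i ∈ Finset.Icc 1 N, s (i + 1) ≤ ∑ i ∈ Finset.Icc 1 (N + 1), s i := by
              intro N
              induction N with
              | zero => simpa using hs0 1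
              | succ N ihN =>
                rw [Finset.sum_Icc_succ_top (by omega),
                  Finset.sum_Icc_succ_top (b := N + 1) (by omega)]
                linarith
            have := e0 (n - 7)
            rwa [show n - 7 + 1 = n - 6 by omega] at this
          have e2 : 4441 * ∑ i ∈ Finset.Icc 1 (n - 7), (k i : ℝ) ≤
              137 / 250 * ∑ i ∈ Finset.Icc 1 (n - 7), s (i + 1) := by
            rw [Finset.mul_sum, Finset.mul_sum]
            refine Finset.sum_le_sum fun i hi => ?_
            rw [Finset.mem_Icc] at hi
            exact hc i hi.1 (by omega)
          linarith
        have := hT (n - 6) (by omega)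
        have hp := hpow 6 (n - 6) (by omega) (by omega)
        rw [show n - 6 + 6 = n by omega] at hp
        norm_num at hp
        linarith [hs0 (n - 6)]
    have := h1 n hn
    linarith [hs0 n]

/-- With coefficients as in the key lemma for the nonrepetitive game over `Fin 4`
(`p = 15`, `α = 12914/6541`, `γ = 10635/4441`), for any Ben strategy `φ` the weights
satisfy `Ŝ_{n+1} ≥ (9/5)·Ŝ_n` for all `n ≥ 1`. -/
theorem stmt_7 (C : List (Fin 4) → ℝ)
    (hnn : ∀ v ∈ Lam 2 15, 0 ≤ C v)
    (hub : ∀ v ∈ Lam 2 15, C v ≤ 10635)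
    (hlb : ∀ v ∈ Lam 2 15, C v = 0 ∨ 4441 ≤ C v)
    (hmin : ∀ v ∈ Lam 2 15, ∀ a : Fin 4,
      (12914 / 6541 : ℝ) * C v ≤
        ∑ b : Fin 4,
          if ¬ HasSq 2 15 (v ++ [a, b]) then C (lamOf 2 15 (v ++ [a, b])) else 0)
    (φ : List (Fin 4) → Fin 4) :
    ∀ n : ℕ, 1 ≤ n → ShatNR φ C (n + 1) ≥ (9 / 5 : ℝ) * ShatNR φ C n := by
  have hC0 : ∀ w, 0 ≤ C (lamOf 2 15 w) := fun w => hnn _ (lamOf_mem w)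
  have hpos : ∀ n, ∀ v ∈ Sfin φ C n, 4441 ≤ C (lamOf 2 15 v) := by
    intro n v hv
    have hg := playable_good (mem_Sfin.1 hv).1
    rcases hlb _ (lamOf_mem v) with h | h
    · exact absurd hg.2.1 (by rw [h]; exact lt_irrefl _)
    · exact h
  have hg0 : ∀ v, 0 ≤ gsum φ C v := by
    intro v
    refine Finset.sum_nonneg fun b _ => ?_
    split_ifs
    · exact hC0 _
    · exact le_rfl
  have hg1 : ∀ n, ∀ v ∈ Sfin φ C n,
      (12914 / 6541 : ℝ) * C (lamOf 2 15 v) - 10635 * (badset φ C v).card ≤ gsum φ C v := by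
    intro n v hv
    have hg := playable_good (mem_Sfin.1 hv).1
    have hw := growth_word C hmin (good_free hg) (φ v)
    have hcard : 10635 * ((badset φ C v).card : ℝ) =
        ∑ b : Fin 4, if b ∈ badset φ C v then (10635 : ℝ) else 0 := by
      rw [← Finset.sum_filter]
      simp [mul_comm]
    rw [hcard, sub_le_iff_le_add, gsum, ← Finset.sum_add_distrib]
    refine hw.trans (Finset.sum_le_sum fun b _ => ?_)
    have hu := hub _ (lamOf_mem (v ++ [φ v, b]))
    have h0 := hC0 (v ++ [φ v, b])
    by_cases hsq : HasSq 2 15 (v ++ [φ v, b])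
    · rw [if_pos hsq]
      split_ifs <;> linarith
    · rw [if_neg hsq]
      by_cases hgd : GoodNR C (v ++ [φ v, b])
      · rw [if_pos hgd]
        split_ifs <;> linarith
      · rw [if_neg hgd]
        rcases h0.eq_or_lt with h | h
        · rw [← h]
          split_ifs <;> norm_num
        · have : b ∈ badset φ C v := by
            simp only [badset, Finset.mem_filter, Finset.mem_univ, true_and]
            exact ⟨hsq, h, hgd⟩
          rw [if_pos this]
          linarith
  have hg2 : ∀ n, ∀ v ∈ Sfin φ C n,
      (12914 / 6541 : ℝ) * 4441 * (1 - (badset φ C v).card) ≤ gsum φ C v := by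
    intro n v hv
    rcases Nat.eq_zero_or_pos (badset φ C v).card with h | h
    · have h1 := hg1 n v hv
      have h2 := hpos n v hv
      rw [h] at h1 ⊢
      push_cast at h1 ⊢
      linarith
    · have h1 := hg0 v
      have : (1 : ℝ) ≤ (badset φ C v).card := by exact_mod_cast h
      nlinarith
  refine numeric (fun n => ShatNR φ C n) (fun n => (Sfin φ C n).card) (fun n => Bad φ C n)
    ?_ ?_ ?_ (fun n => bad_le C hmin φ n)
  · intro n
    simp only [Shat_eq]
    have := Finset.card_nsmul_le_sum _ _ _ (hpos n)
    rw [nsmul_eq_mul] at this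
    linarith
  · intro n hn
    simp only [Shat_succ φ C n hn, Shat_eq φ C n, Bad]
    push_cast
    rw [Finset.mul_sum, Finset.mul_sum, ← Finset.sum_sub_distrib]
    exact Finset.sum_le_sum (hg1 n)
  · intro n hn
    simp only [Shat_succ φ C n hn, Bad]
    push_cast
    have := Finset.sum_le_sum (hg2 n)
    rw [← Finset.mul_sum, Finset.sum_sub_distrib] at this
    simpa using this
end
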